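/- arXiv:2507.04728 — 2 statements merged into one kernel-verified Lean document; each statement's English description precedes it below -/
import Mathlib

section
/- Let G~ be a mixed bicyclic graph whose underlying graph is θ(p,l,q) with p even and l, q odd. Then r(G~) = 2m(G) − 2κ(G) if and only if the two odd cycles of G~ have odd signatures and the even cycle C~_{q+l−2} of G~ satisfies q + l + σ(C~_{q+l−2}) ≡ 2 (mod 4). -/
open scoped Classical

namespace MixedPaper

universe u

/-- A mixed graph: a finite simple graph together with an orientation of a subset
of its edges.  `arc u v = true` means there is an arc from `u` to `v`. -/
structure MixedGraph (V : Type u) where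
  graph : SimpleGraph V
  arc : V → V → Bool
  arc_adj : ∀ u v, arc u v → graph.Adj u v
  arc_antisymm : ∀ u v, arc u v → ¬ arc v u

variable {V : Type u}

/-- The Hermitian adjacency matrix of a mixed graph. -/
noncomputable def MixedGraph.hMatrix [Fintype V] [DecidableEq V] (M : MixedGraph V) :
    Matrix V V ℂ := fun u v =>
  if M.arc u v then Complex.I
  else if M.arc v u then -Complex.I
  else if M.graph.Adj u v then 1 else 0

/-- The H-rank of a mixed graph: the rank of its Hermitian adjacency matrix. -/
noncomputable def MixedGraph.hRank [Fintype V] [DecidableEq V] (M : MixedGraph V) : ℕ :=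
  M.hMatrix.rank

/-- The matching number of a simple graph. -/
noncomputable def matchingNumber (G : SimpleGraph V) : ℕ :=
  sSup {k | ∃ N : G.Subgraph, N.IsMatching ∧ N.edgeSet.ncard = k}

/-- A subgraph is a cycle subgraph if it is connected and every one of its vertices
has exactly two neighbours in it. -/
def IsCycleSubgraph {G : SimpleGraph V} (C : G.Subgraph) : Prop :=
  C.Connected ∧ ∀ v ∈ C.verts, {w | C.Adj v w}.ncard = 2

/-- κ(G) : the number of even cycles of G. -/
noncomputable def evenCycleCount (G : SimpleGraph V) : ℕ :=
  {C : G.Subgraph | IsCycleSubgraph C ∧ Even C.verts.ncard}.ncard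

/-- c(G) = |E(G)| - |V(G)| + ω(G), the cyclomatic number. -/
noncomputable def cyclomatic [Fintype V] (G : SimpleGraph V) : ℤ :=
  (G.edgeSet.ncard : ℤ) - (Fintype.card V : ℤ) + (Nat.card G.ConnectedComponent : ℤ)

/-- The induced mixed subgraph on a set of vertices. -/
def MixedGraph.induce (M : MixedGraph V) (S : Set V) : MixedGraph S where
  graph := M.graph.induce S
  arc := fun a b => M.arc a.1 b.1
  arc_adj := fun a b h => M.arc_adj a.1 b.1 h
  arc_antisymm := fun a b h => M.arc_antisymm a.1 b.1 h

/-- The mixed subgraph induced by a connected component of the underlying graph. -/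
def MixedGraph.comp (M : MixedGraph V) (c : M.graph.ConnectedComponent) :
    MixedGraph c.supp := M.induce c.supp

/-- The signature |f - b| of a closed walk in a mixed graph: the absolute difference
between the numbers of forward and backward arcs along the walk. -/
def walkSignature (M : MixedGraph V) {u : V} (w : M.graph.Walk u u) : ℕ :=
  ((w.darts.countP fun d => M.arc d.toProd.1 d.toProd.2 : ℤ) -
    (w.darts.countP fun d => M.arc d.toProd.2 d.toProd.1 : ℤ)).natAbs

/-- The signature of the cycle subgraph `C` of the mixed graph `M` satisfies the
predicate `P` (expressed via a closed walk traversing `C`; the signature does not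
depend on the choice of traversal). -/
def CycleSig (M : MixedGraph V) (C : M.graph.Subgraph) (P : ℕ → Prop) : Prop :=
  ∃ (u : V) (w : M.graph.Walk u u), w.IsCycle ∧
    {v | v ∈ w.support} = C.verts ∧ {e | e ∈ w.edges} = C.edgeSet ∧
    P (walkSignature M w)

/-- `C` is a pendant cycle with unique vertex `x` of degree 3. -/
def IsPendantCycle (G : SimpleGraph V) (C : G.Subgraph) (x : V) : Prop :=
  IsCycleSubgraph C ∧ x ∈ C.verts ∧ {w | G.Adj x w}.ncard = 3 ∧
    ∀ v ∈ C.verts, v ≠ x → {w | G.Adj v w}.ncard = 2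

/-- G has no pendant vertices (vertices of degree 1). -/
def NoPendantVerts (G : SimpleGraph V) : Prop := ∀ u : V, {w | G.Adj u w}.ncard ≠ 1

/-- The (distinct) cycles of G are pairwise vertex-disjoint. -/
def CyclesVertexDisjoint (G : SimpleGraph V) : Prop :=
  ∀ C₁ C₂ : G.Subgraph, IsCycleSubgraph C₁ → IsCycleSubgraph C₂ → C₁ ≠ C₂ →
    Disjoint C₁.verts C₂.verts

/-- The (distinct) even cycles of G are pairwise vertex-disjoint. -/
def EvenCyclesVertexDisjoint (G : SimpleGraph V) : Prop :=
  ∀ C₁ C₂ : G.Subgraph, IsCycleSubgraph C₁ → IsCycleSubgraph C₂ →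
    Even C₁.verts.ncard → Even C₂.verts.ncard → C₁ ≠ C₂ →
    Disjoint C₁.verts C₂.verts

/-- One pendant `K₂` deletion step, recorded on the surviving vertex sets:
`u` is pendant in the graph induced on `S` with unique neighbour `v` there,
and both are deleted. -/
def PendantStep (G : SimpleGraph V) (S T : Set V) : Prop :=
  ∃ u v, u ∈ S ∧ v ∈ S ∧ {w | w ∈ S ∧ G.Adj u w} = {v} ∧ T = S \ {u, v}

/-- `S` is reachable from the full vertex set by a sequence of pendant K₂ deletions. -/
def PendantReaches (G : SimpleGraph V) (S : Set V) : Prop :=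
  Relation.ReflTransGen (PendantStep G) Set.univ S

/-- The graph induced on `S` has no pendant vertices. -/
def NoPendantIn (G : SimpleGraph V) (S : Set V) : Prop :=
  ∀ u ∈ S, {w | w ∈ S ∧ G.Adj u w}.ncard ≠ 1

/-- `u` lies on some even cycle of `G`. -/
def OnEvenCycle (G : SimpleGraph V) (u : V) : Prop :=
  ∃ C : G.Subgraph, IsCycleSubgraph C ∧ Even C.verts.ncard ∧ u ∈ C.verts

/-- G is the graph ∞(p,1,q): two cycles of lengths p and q sharing exactly one vertex. -/
def IsInfinityGraph (G : SimpleGraph V) (p q : ℕ) : Prop :=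
  ∃ C₁ C₂ : G.Subgraph, IsCycleSubgraph C₁ ∧ IsCycleSubgraph C₂ ∧
    C₁.verts.ncard = p ∧ C₂.verts.ncard = q ∧
    (C₁.verts ∩ C₂.verts).ncard = 1 ∧ C₁ ⊔ C₂ = ⊤

/-- G is the theta graph θ(p,l,q): three internally disjoint paths with p, l, q
vertices respectively, joining two common endvertices. -/
def IsThetaGraph (G : SimpleGraph V) (p l q : ℕ) : Prop :=
  2 ≤ p ∧ 2 ≤ l ∧ 2 ≤ q ∧ ¬(p = 2 ∧ l = 2) ∧ ¬(p = 2 ∧ q = 2) ∧ ¬(l = 2 ∧ q = 2) ∧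
  ∃ (a b : V) (W₁ W₂ W₃ : G.Walk a b), W₁.IsPath ∧ W₂.IsPath ∧ W₃.IsPath ∧
    W₁.length = p - 1 ∧ W₂.length = l - 1 ∧ W₃.length = q - 1 ∧
    (∀ v : V, v ∈ W₁.support ∨ v ∈ W₂.support ∨ v ∈ W₃.support) ∧
    (∀ e ∈ G.edgeSet, e ∈ W₁.edges ∨ e ∈ W₂.edges ∨ e ∈ W₃.edges) ∧
    {v | v ∈ W₁.support ∧ v ∈ W₂.support} = {a, b} ∧
    {v | v ∈ W₁.support ∧ v ∈ W₃.support} = {a, b} ∧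
    {v | v ∈ W₂.support ∧ v ∈ W₃.support} = {a, b}

/-- Every odd cycle of `M` has signature satisfying `P`. -/
def OddCyclesSig (M : MixedGraph V) (P : ℕ → Prop) : Prop :=
  ∀ C : M.graph.Subgraph, IsCycleSubgraph C → Odd C.verts.ncard → CycleSig M C P

/-- Every even cycle of `M`, of length `n`, has signature `s` satisfying `P n s`. -/
def EvenCyclesSig (M : MixedGraph V) (P : ℕ → ℕ → Prop) : Prop :=
  ∀ C : M.graph.Subgraph, IsCycleSubgraph C → Even C.verts.ncard →
    CycleSig M C (P C.verts.ncard)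

/-- The whole mixed graph is a single cycle. -/
def IsCycleMG (M : MixedGraph V) : Prop := IsCycleSubgraph (⊤ : M.graph.Subgraph)

/-- The family 𝔊₀. -/
def MemG0 [Fintype V] [DecidableEq V] (M : MixedGraph V) : Prop :=
  M.graph.Connected ∧ 1 ≤ cyclomatic M.graph ∧ CyclesVertexDisjoint M.graph ∧
  NoPendantVerts M.graph ∧
  ∃ (C : M.graph.Subgraph) (x : V), IsPendantCycle M.graph C x ∧ Odd C.verts.ncard ∧
    CycleSig M C Odd ∧
    ((M.induce (C.vertsᶜ ∪ {x})).hRank : ℤ) =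
      2 * (matchingNumber (M.induce (C.vertsᶜ ∪ {x})).graph : ℤ) -
        2 * cyclomatic (M.induce (C.vertsᶜ ∪ {x})).graph

/-- The family 𝔛₁ : mixed ∞(p,1,q)-graphs, p even, q odd, whose odd cycle has odd
signature and whose even cycle C̃_p satisfies σ ≡ p (mod 4). -/
def MemX1 (M : MixedGraph V) : Prop :=
  ∃ p q : ℕ, Even p ∧ Odd q ∧ IsInfinityGraph M.graph p q ∧
    OddCyclesSig M Odd ∧ EvenCyclesSig M (fun n s => s % 4 = n % 4)

/-- The family 𝔛₂ : mixed θ(p,l,q)-graphs, p even, l q odd, whose two odd cycles have odd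
signatures and whose even cycle C̃_{q+l-2} satisfies q + l + σ ≡ 2 (mod 4). -/
def MemX2 (M : MixedGraph V) : Prop :=
  ∃ p l q : ℕ, Even p ∧ Odd l ∧ Odd q ∧ IsThetaGraph M.graph p l q ∧
    OddCyclesSig M Odd ∧ EvenCyclesSig M (fun _ s => (q + l + s) % 4 = 2)

/-- The family 𝔊₂ = 𝔊₀ ∪ 𝔛₁ ∪ 𝔛₂ together with the mixed odd cycles of odd signature. -/
def MemG2 [Fintype V] [DecidableEq V] (M : MixedGraph V) : Prop :=
  MemG0 M ∨ MemX1 M ∨ MemX2 M ∨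
    (IsCycleMG M ∧ Odd (Nat.card V) ∧ CycleSig M ⊤ Odd)

/-- The family 𝔜₁. -/
def MemY1 (M : MixedGraph V) : Prop :=
  ∃ p q : ℕ, Even p ∧ Odd q ∧ IsInfinityGraph M.graph p q ∧
    OddCyclesSig M Even ∧ EvenCyclesSig M (fun n s => s % 4 = n % 4)

/-- The family 𝔜₂. -/
def MemY2 (M : MixedGraph V) : Prop :=
  ∃ p l q : ℕ, Even p ∧ Odd l ∧ Odd q ∧ IsThetaGraph M.graph p l q ∧
    OddCyclesSig M Even ∧ EvenCyclesSig M (fun _ s => (q + l + s) % 4 = 2)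

/-- `M` is a disjoint union of `k` even cycles and one odd cycle with even signature. -/
def IsDisjointUnionEvenCyclesOddCycleEvenSig (M : MixedGraph V) (k : ℤ) : Prop :=
  (∀ c : M.graph.ConnectedComponent, IsCycleMG (M.comp c)) ∧
  (({c : M.graph.ConnectedComponent | Even (Nat.card c.supp)}.ncard : ℤ) = k) ∧
  (∃! c : M.graph.ConnectedComponent, Odd (Nat.card c.supp)) ∧
  (∀ c : M.graph.ConnectedComponent, Odd (Nat.card c.supp) →
    CycleSig (M.comp c) ⊤ Even)

/-- The family 𝔉₀. -/
def MemF0 [Fintype V] [DecidableEq V] (M : MixedGraph V) : Prop :=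
  M.graph.Connected ∧ 2 ≤ cyclomatic M.graph ∧ CyclesVertexDisjoint M.graph ∧
  NoPendantVerts M.graph ∧
  (∃ (C₀ : M.graph.Subgraph) (x₀ : V), IsPendantCycle M.graph C₀ x₀ ∧ Odd C₀.verts.ncard ∧
    CycleSig M C₀ Even ∧
    ∀ C : M.graph.Subgraph, IsCycleSubgraph C → C ≠ C₀ →
      Even C.verts.ncard ∧ CycleSig M C (fun s => s % 4 = C.verts.ncard % 4)) ∧
  (∃ (Cq : M.graph.Subgraph) (x : V), IsPendantCycle M.graph Cq x ∧ Even Cq.verts.ncard ∧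
    ∃ S : Set ↥(Cq.vertsᶜ ∪ {x}),
      PendantReaches (M.induce (Cq.vertsᶜ ∪ {x})).graph S ∧
      NoPendantIn (M.induce (Cq.vertsᶜ ∪ {x})).graph S ∧
      IsDisjointUnionEvenCyclesOddCycleEvenSig
        ((M.induce (Cq.vertsᶜ ∪ {x})).induce S)
        (cyclomatic (M.induce (Cq.vertsᶜ ∪ {x})).graph))

/-- The family 𝔉₂ = 𝔉₀ ∪ 𝔜₁ ∪ 𝔜₂ together with the mixed odd cycles of even signature. -/
def MemF2 [Fintype V] [DecidableEq V] (M : MixedGraph V) : Prop :=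
  MemF0 M ∨ MemY1 M ∨ MemY2 M ∨
    (IsCycleMG M ∧ Odd (Nat.card V) ∧ CycleSig M ⊤ Even)

/-- A connected component that is either an even cycle C̃_q with σ ≡ q (mod 4),
or an isolated vertex. -/
def GoodOtherComp (M : MixedGraph V) : Prop :=
  (IsCycleMG M ∧ Even (Nat.card V) ∧
    CycleSig M ⊤ (fun s => s % 4 = (Nat.card V) % 4)) ∨
  Nat.card V = 1

/-- A fractional matching of `G`, given as a weight function on `Sym2 V` vanishing
outside the edge set. -/
def IsFracMatching [Fintype V] [DecidableEq V] (G : SimpleGraph V) (f : Sym2 V → ℝ) : Prop :=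
  (∀ e ∈ G.edgeSet, 0 ≤ f e ∧ f e ≤ 1) ∧ (∀ e, e ∉ G.edgeSet → f e = 0) ∧
    ∀ v : V, ∑ e ∈ Finset.univ.filter (fun e : Sym2 V => v ∈ e), f e ≤ 1

/-- The fractional matching number m*(G). -/
noncomputable def fracMatchingNumber [Fintype V] [DecidableEq V] (G : SimpleGraph V) : ℝ :=
  sSup {x : ℝ | ∃ f : Sym2 V → ℝ, IsFracMatching G f ∧ ∑ e : Sym2 V, f e = x}

/-- Membership in the family ℱ : fractional matchings of total weight m*(G) taking
values in {0, 1/2, 1}. -/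
def InOptFamily [Fintype V] [DecidableEq V] (G : SimpleGraph V) (f : Sym2 V → ℝ) : Prop :=
  IsFracMatching G f ∧ (∑ e : Sym2 V, f e) = fracMatchingNumber G ∧
    ∀ e : Sym2 V, f e = 0 ∨ f e = 1 / 2 ∨ f e = 1

/-- An optimal fractional matching: a member of ℱ with the largest number of
edges of weight 1. -/
def IsOptFracMatching [Fintype V] [DecidableEq V] (G : SimpleGraph V) (f : Sym2 V → ℝ) : Prop :=
  InOptFamily G f ∧
    ∀ g : Sym2 V → ℝ, InOptFamily G g →
      {e : Sym2 V | g e = 1}.ncard ≤ {e : Sym2 V | f e = 1}.ncard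

/-- E₁(C) : the edges of `G` with exactly one endpoint on the cycle `C`. -/
def cutEdges (G : SimpleGraph V) (C : G.Subgraph) : Set (Sym2 V) :=
  {e | e ∈ G.edgeSet ∧ ∃ a b : V, e = s(a, b) ∧ a ∈ C.verts ∧ b ∉ C.verts}

/-!
Let `z j = I ^ (length of W j - arc sum of W j)` for the three paths `W 0`, `W 1`, `W 2` (the first
of odd length, the others of even length) joining the branch vertices `a` and `b`. Rescaling the
entries of a kernel vector `f` of the Hermitian adjacency matrix by powers of `I` turns its
equations at the interior vertices of each path into `u (i + 2) = u i`, so `f` is determined by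
`f a` and one entry per path. Agreement at `b` and the equations at `a` and `b` then leave at most
two degrees of freedom, and exactly two if and only if `z 1 = z 2` and `z 0 ^ 2 = z 1 ^ 2`, which
are the signature conditions. On the other side, the graph has a Hamiltonian path with an even
number of vertices, hence a perfect matching, and a single even cycle, so the bound
`2 * m - 2 * κ` is the number of vertices minus two.
-/

section

open SimpleGraph
open Complex (I)

/-- A generalized theta graph: `G` is the union of the paths `W j` from `a` to `b`, any two of
which share only their ends, and at most one of which is a single edge. -/
structure IsGeneralizedTheta {ι : Type*} {G : SimpleGraph V} {a b : V} (W : ι → G.Walk a b) :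
    Prop where
  ne : a ≠ b
  isPath : ∀ j, (W j).IsPath
  one_lt_length : Pairwise fun j j' => 1 < (W j).length ∨ 1 < (W j').length
  eq_or_eq : Pairwise fun j j' => ∀ v, v ∈ (W j).support → v ∈ (W j').support → v = a ∨ v = b
  exists_mem_support : ∀ v, ∃ j, v ∈ (W j).support
  exists_adj : ∀ u v, G.Adj u v → ∃ j, (W j).toSubgraph.Adj u v

theorem IsThetaGraph.exists_isGeneralizedTheta {G : SimpleGraph V} {p l q : ℕ}
    (hG : IsThetaGraph G p l q) :
    ∃ (a b : V) (W : Fin 3 → G.Walk a b), IsGeneralizedTheta W ∧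
      (W 0).length = p - 1 ∧ (W 1).length = l - 1 ∧ (W 2).length = q - 1 := by
  obtain ⟨hp, hl, hq, hpl, hpq, hlq, a, b, W₁, W₂, W₃, h₁, h₂, h₃, hp', hl', hq', hsupp, hedges,
    h₁₂, h₁₃, h₂₃⟩ := hG
  refine ⟨a, b, ![W₁, W₂, W₃], ⟨?_, ?_, ?_, ?_, ?_, ?_⟩, hp', hl', hq'⟩
  · rintro rfl
    have := Walk.length_eq_zero_iff.2 (Walk.isPath_iff_nil.1 h₁)
    omega
  · simp [Fin.forall_fin_succ, h₁, h₂, h₃]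
  · simp only [Pairwise, Fin.forall_fin_succ, Fin.succ_zero_eq_one, Fin.succ_one_eq_two,
      Matrix.cons_val, IsEmpty.forall_iff]
    grind
  · simp only [Set.ext_iff, Set.mem_ofPred_eq, Set.mem_insert_iff, Set.mem_singleton_iff]
      at h₁₂ h₁₃ h₂₃
    simp only [Pairwise, Fin.forall_fin_succ, Fin.succ_zero_eq_one, Fin.succ_one_eq_two,
      Matrix.cons_val, IsEmpty.forall_iff]
    grind
  · simpa [Fin.exists_fin_succ] using hsupp
  · intro u v huv
    simpa [Fin.exists_fin_succ, Walk.adj_toSubgraph_iff_mem_edges] using hedges s(u, v) huv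

namespace IsGeneralizedTheta

variable {ι : Type*} {G : SimpleGraph V} {a b : V} {W : ι → G.Walk a b}

theorem length_pos (hW : IsGeneralizedTheta W) (j : ι) : 0 < (W j).length :=
  Walk.not_nil_iff_lt_length.1 (Walk.not_nil_of_ne hW.ne)

theorem reverse (hW : IsGeneralizedTheta W) : IsGeneralizedTheta fun j => (W j).reverse where
  ne := hW.ne.symm
  isPath j := (hW.isPath j).reverse
  one_lt_length := by simpa using hW.one_lt_length
  eq_or_eq := by simpa [or_comm] using hW.eq_or_eq
  exists_mem_support := by simpa using hW.exists_mem_support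
  exists_adj := by simpa using hW.exists_adj

theorem adj_iff (hW : IsGeneralizedTheta W) {u v : V} :
    G.Adj u v ↔ ∃ j, (W j).toSubgraph.Adj u v :=
  ⟨hW.exists_adj u v, fun ⟨_, h⟩ => h.adj_sub⟩

theorem exists_getVert_eq (hW : IsGeneralizedTheta W) (v : V) :
    ∃ j, ∃ i ≤ (W j).length, (W j).getVert i = v := by
  obtain ⟨j, hj⟩ := hW.exists_mem_support v
  obtain ⟨i, rfl, hi⟩ := Walk.mem_support_iff_exists_getVert.1 hj
  exact ⟨j, i, hi, rfl⟩

theorem eq_of_getVert_mem_support (hW : IsGeneralizedTheta W) {j j' : ι} {i : ℕ} (h₀ : i ≠ 0)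
    (hi : i < (W j).length) (hmem : (W j).getVert i ∈ (W j').support) : j' = j := by
  by_contra hne
  rcases hW.eq_or_eq (Ne.symm hne) _ ((W j).getVert_mem_support i) hmem with h | h
  · exact h₀ (((hW.isPath j).getVert_eq_start_iff hi.le).1 h)
  · exact hi.ne (((hW.isPath j).getVert_eq_end_iff hi.le).1 h)

theorem exists_forall_getVert_eq (hW : IsGeneralizedTheta W) {α : Type*} (x : ι → ℕ → α)
    (h₀ : ∀ j j', x j 0 = x j' 0)
    (h₁ : ∀ j j', x j (W j).length = x j' (W j').length) :
    ∃ f : V → α, ∀ j, ∀ i ≤ (W j).length, f ((W j).getVert i) = x j i := by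
  choose J I hI hJI using hW.exists_getVert_eq
  refine ⟨fun v => x (J v) (I v), fun j i hi => ?_⟩
  have hv := hJI ((W j).getVert i)
  have hIv := hI ((W j).getVert i)
  dsimp only
  generalize J ((W j).getVert i) = j', I ((W j).getVert i) = i' at hv hIv
  rcases eq_or_ne i 0 with rfl | hi₀
  · obtain rfl : i' = 0 := ((hW.isPath j').getVert_eq_start_iff hIv).1 (hv.trans (by simp))
    exact h₀ j' j
  rcases hi.eq_or_lt with rfl | hi₁
  · obtain rfl := ((hW.isPath j').getVert_eq_end_iff hIv).1 (hv.trans (by simp))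
    exact h₁ j' j
  · obtain rfl := hW.eq_of_getVert_mem_support hi₀ hi₁ (hv ▸ (W j').getVert_mem_support i')
    rw [(hW.isPath j').getVert_injOn hIv hi hv]

theorem neighborSet_getVert (hW : IsGeneralizedTheta W) {j : ι} {i : ℕ} (h₀ : i ≠ 0)
    (hi : i < (W j).length) :
    G.neighborSet ((W j).getVert i) = {(W j).getVert (i - 1), (W j).getVert (i + 1)} := by
  rw [← (hW.isPath j).neighborSet_toSubgraph_internal h₀ hi]
  ext v
  simp only [mem_neighborSet, Subgraph.mem_neighborSet, hW.adj_iff]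
  refine ⟨fun ⟨j', h⟩ => ?_, fun h => ⟨j, h⟩⟩
  rwa [hW.eq_of_getVert_mem_support h₀ hi (Walk.mem_support_of_adj_toSubgraph h)] at h

theorem neighborSet_start (hW : IsGeneralizedTheta W) :
    G.neighborSet a = Set.range fun j => (W j).snd := by
  ext v
  simp only [mem_neighborSet, hW.adj_iff, Set.mem_range, eq_comm (b := v)]
  refine exists_congr fun j => ?_
  rw [← Subgraph.mem_neighborSet, (hW.isPath j).neighborSet_toSubgraph_startpoint
    (Walk.not_nil_of_ne hW.ne), Set.mem_singleton_iff]

theorem neighborSet_end (hW : IsGeneralizedTheta W) :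
    G.neighborSet b = Set.range fun j => (W j).penultimate := by
  simpa using hW.reverse.neighborSet_start

theorem snd_injective (hW : IsGeneralizedTheta W) : Function.Injective fun j => (W j).snd := by
  intro j j' (h : (W j).snd = (W j').snd)
  by_contra hne
  wlog hlen : 1 < (W j).length generalizing j j'
  · exact this h.symm (Ne.symm hne) ((hW.one_lt_length hne).resolve_left hlen)
  have hmem : (W j).snd ∈ (W j').support := h ▸ (W j').getVert_mem_support 1
  exact hne (hW.eq_of_getVert_mem_support one_ne_zero hlen hmem).symm

theorem penultimate_injective (hW : IsGeneralizedTheta W) :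
    Function.Injective fun j => (W j).penultimate := by
  simpa using hW.reverse.snd_injective

end IsGeneralizedTheta

section Matching

variable {G : SimpleGraph V}

theorem exists_isMatching_verts_eq_support {u v : V} :
    ∀ p : G.Walk u v, p.IsPath → Odd p.length →
      ∃ N : G.Subgraph, N.IsMatching ∧ N.verts = {w | w ∈ p.support}
  | .nil, _, hodd => by simp at hodd
  | .cons huv .nil, _, _ => ⟨_, .subgraphOfAdj huv, by ext; simp⟩
  | .cons hux (.cons hxy p), hp, hodd => by
    simp only [Walk.cons_isPath_iff, Walk.support_cons, List.mem_cons, not_or] at hp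
    simp only [Walk.length_cons, Nat.odd_add_one, not_not] at hodd
    obtain ⟨N, hN, hverts⟩ := exists_isMatching_verts_eq_support p hp.1.1 (by simpa using hodd)
    refine ⟨_, Subgraph.IsMatching.sup (.subgraphOfAdj hux) hN ?_, ?_⟩
    · rw [(Subgraph.IsMatching.subgraphOfAdj hux).support_eq_verts, hN.support_eq_verts, hverts]
      simp [Set.disjoint_left, hp]
    · ext w
      simp [hverts, or_assoc]

theorem two_mul_ncard_edgeSet_of_isMatching [Finite V] {N : G.Subgraph} (hN : N.IsMatching) :
    2 * N.edgeSet.ncard = N.verts.ncard := by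
  have := Fintype.ofFinite V
  have hdeg (v : N.verts) [Fintype (N.neighborSet v)] : N.degree v = 1 :=
    Subgraph.degree_eq_one_iff_existsUnique_adj.2 (hN v.2)
  have hedges : N.edgeSet.ncard = N.coe.edgeFinset.card := by
    rw [← N.image_coe_edgeSet_coe,
      Set.ncard_image_of_injective _ (Sym2.map.injective Subtype.val_injective),
      ← coe_edgeFinset, Set.ncard_coe_finset]
  rw [hedges, ← N.coe.sum_degrees_eq_twice_card_edges, ← Nat.card_coe_set_eq]
  simp only [Subgraph.coe_degree, hdeg, Finset.sum_const, Finset.card_univ, smul_eq_mul, mul_one,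
    Nat.card_eq_fintype_card]

theorem two_mul_matchingNumber [Fintype V] {N : G.Subgraph} (hN : N.IsPerfectMatching) :
    2 * matchingNumber G = Fintype.card V := by
  have hcard := two_mul_ncard_edgeSet_of_isMatching hN.1
  rw [hN.2.verts_eq_univ, Set.ncard_univ, Nat.card_eq_fintype_card] at hcard
  have hgreatest : IsGreatest {k | ∃ N : G.Subgraph, N.IsMatching ∧ N.edgeSet.ncard = k}
      N.edgeSet.ncard := by
    refine ⟨⟨N, hN.1, rfl⟩, ?_⟩
    rintro _ ⟨N', hN', rfl⟩
    have := two_mul_ncard_edgeSet_of_isMatching hN'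
    have := Set.ncard_le_card N'.verts
    rw [Nat.card_eq_fintype_card] at this
    omega
  rw [matchingNumber, hgreatest.csSup_eq, hcard]

theorem exists_isPerfectMatching_of_isHamiltonian {u v : V} {p : G.Walk u v}
    (hp : p.IsHamiltonian) (hodd : Odd p.length) : ∃ N : G.Subgraph, N.IsPerfectMatching := by
  obtain ⟨N, hN, hverts⟩ := exists_isMatching_verts_eq_support p hp.isPath hodd
  exact ⟨N, hN, fun v => hverts ▸ hp.mem_support v⟩

end Matching

section Paths

variable {G : SimpleGraph V} {u v w : V}

theorem start_notMem_tail_support {p : G.Walk u v} (hp : p.IsPath) : u ∉ p.support.tail := by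
  have h := hp.support_nodup
  rw [← Walk.cons_tail_support] at h
  exact h.notMem

theorem isPath_append {p : G.Walk u v} {q : G.Walk v w} (hp : p.IsPath) (hq : q.IsPath)
    (h : ∀ x ∈ p.support, x ∈ q.support → x = v) : (p.append q).IsPath := by
  rw [Walk.isPath_def, Walk.support_append, List.nodup_append']
  refine ⟨hp.support_nodup, hq.support_nodup.tail, fun x hx hx' => ?_⟩
  exact start_notMem_tail_support hq (h x hx (List.mem_of_mem_tail hx') ▸ hx')

theorem mem_support_dropLast_iff {p : G.Walk u v} (hp : p.IsPath) (hnil : ¬ p.Nil) {x : V} :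
    x ∈ p.dropLast.support ↔ x ∈ p.support ∧ x ≠ v := by
  have hp' := hp.support_nodup
  rw [← Walk.support_dropLast_concat hnil, List.nodup_append'] at hp'
  rw [← Walk.support_dropLast_concat hnil]
  simp only [List.mem_append, List.mem_singleton]
  grind [List.disjoint_singleton]

end Paths

namespace IsGeneralizedTheta

variable {G : SimpleGraph V} {a b : V} {W : Fin 3 → G.Walk a b}

/-- Follow `W 1` backwards from its last interior vertex to `a`, then `W 0` to `b`, then `W 2`
backwards to its first interior vertex. -/
theorem exists_isHamiltonian (hW : IsGeneralizedTheta W) :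
    ∃ (u v : V) (p : G.Walk u v), p.IsHamiltonian ∧
      p.length + 2 = (W 0).length + (W 1).length + (W 2).length := by
  let p := ((W 1).dropLast.reverse.append (W 0)).append (W 2).reverse.dropLast
  have hnil₁ : ¬ (W 1).Nil := Walk.not_nil_of_ne hW.ne
  have hnil₂ : ¬ (W 2).reverse.Nil := Walk.not_nil_of_ne hW.ne.symm
  have hmem₁ (x : V) := mem_support_dropLast_iff (hW.isPath 1) hnil₁ (x := x)
  have hmem₂ (x : V) := mem_support_dropLast_iff (hW.isPath 2).reverse hnil₂ (x := x)
  simp only [Walk.support_reverse, List.mem_reverse] at hmem₂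
  have h01 := hW.eq_or_eq (show (0 : Fin 3) ≠ 1 by decide)
  have h02 := hW.eq_or_eq (show (0 : Fin 3) ≠ 2 by decide)
  have h12 := hW.eq_or_eq (show (1 : Fin 3) ≠ 2 by decide)
  have hp : p.IsPath := by
    refine isPath_append (isPath_append (hW.isPath 1).dropLast.reverse (hW.isPath 0) ?_)
      (hW.isPath 2).reverse.dropLast ?_
    · simp only [Walk.support_reverse, List.mem_reverse, hmem₁]
      grind
    · simp only [Walk.mem_support_append_iff, Walk.support_reverse, List.mem_reverse, hmem₁,
        hmem₂]
      grind
  refine ⟨_, _, p, hp.isHamiltonian_of_mem fun v => ?_, ?_⟩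
  · obtain ⟨j, hj⟩ := hW.exists_mem_support v
    simp only [p, Walk.mem_support_append_iff, Walk.support_reverse, List.mem_reverse, hmem₁,
      hmem₂]
    have := (W 0).start_mem_support
    have := (W 0).end_mem_support
    fin_cases j <;> grind
  · have h₁ := hW.length_pos 1
    have h₂ := hW.length_pos 2
    simp only [p, Walk.length_append, Walk.length_reverse, Walk.length_dropLast]
    omega

theorem exists_isPerfectMatching (hW : IsGeneralizedTheta W)
    (hodd : Odd ((W 0).length + (W 1).length + (W 2).length)) :
    ∃ N : G.Subgraph, N.IsPerfectMatching := by
  obtain ⟨u, v, p, hp, hlen⟩ := hW.exists_isHamiltonian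
  refine exists_isPerfectMatching_of_isHamiltonian hp ?_
  rwa [← hlen, Nat.odd_add, iff_true_right even_two] at hodd

end IsGeneralizedTheta

section Cycles

variable {G : SimpleGraph V} {u : V}

theorem ncard_verts_toSubgraph {w : G.Walk u u} (hw : w.IsCycle) :
    w.toSubgraph.verts.ncard = w.length := by
  have hverts : w.toSubgraph.verts = w.support.tail.toFinset := by
    ext v
    rw [Walk.mem_verts_toSubgraph, List.coe_toFinset, Set.mem_ofPred_eq, Walk.mem_support_iff,
      or_iff_right_of_imp]
    rintro rfl
    exact Walk.end_mem_tail_support hw.not_nil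
  rw [hverts, Set.ncard_coe_finset, List.toFinset_card_of_nodup hw.support_nodup,
    List.length_tail, Walk.length_support, Nat.add_sub_cancel]

theorem isCycleSubgraph_toSubgraph {w : G.Walk u u} (hw : w.IsCycle) :
    IsCycleSubgraph w.toSubgraph :=
  ⟨w.toSubgraph_connected, fun _ hv =>
    hw.ncard_neighborSet_toSubgraph_eq_two (w.mem_verts_toSubgraph.1 hv)⟩

theorem eq_of_toSubgraph_eq_of_snd_eq {w w' : G.Walk u u} (hw : w.IsCycle) (hw' : w'.IsCycle)
    (h : w.toSubgraph = w'.toSubgraph) (hsnd : w.snd = w'.snd) : w = w' := by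
  have hlen : w.length = w'.length := by
    rw [← ncard_verts_toSubgraph hw, h, ncard_verts_toSubgraph hw']
  refine Walk.ext_getVert_le_length hlen fun k => ?_
  induction k using Nat.twoStepInduction with
  | zero => simp
  | one => exact fun _ => hsnd
  | more k ih ih' =>
    intro hk
    have hnbrs := hw.neighborSet_toSubgraph_internal k.succ_ne_zero (by omega)
    have hnbrs' := hw'.neighborSet_toSubgraph_internal k.succ_ne_zero (by omega)
    have hne := hw.getVert_sub_one_ne_getVert_add_one (i := k + 1) (by omega)
    rw [h, ih' (by omega), hnbrs'] at hnbrs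
    simp only [Nat.add_sub_cancel, Nat.succ_eq_add_one, ih (by omega)] at hnbrs hne
    have := hnbrs.symm ▸ Set.mem_insert_of_mem _ (Set.mem_singleton (w.getVert (k + 1 + 1)))
    exact this.resolve_left hne.symm

theorem eq_or_eq_reverse_of_toSubgraph_eq {w w' : G.Walk u u} (hw : w.IsCycle)
    (hw' : w'.IsCycle) (h : w.toSubgraph = w'.toSubgraph) : w = w' ∨ w = w'.reverse := by
  have hmem : w.snd ∈ w'.toSubgraph.neighborSet u := by
    rw [← h, hw.neighborSet_toSubgraph_endpoint]
    exact Set.mem_insert _ _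
  rw [hw'.neighborSet_toSubgraph_endpoint] at hmem
  refine hmem.imp (eq_of_toSubgraph_eq_of_snd_eq hw hw' h) fun hpen => ?_
  exact eq_of_toSubgraph_eq_of_snd_eq hw hw'.reverse (by rw [h, Walk.toSubgraph_reverse])
    (by rw [Walk.snd_reverse, hpen])

end Cycles

namespace MixedGraph

/-- The direction of an edge: `1` for an arc from `u` to `v`, `-1` for one from `v` to `u`, and
`0` if the edge is unoriented. -/
def arcSign (M : MixedGraph V) (u v : V) : ℤ :=
  if M.arc u v then 1 else if M.arc v u then -1 else 0

/-- The signed number of arcs along a walk: forward arcs minus backward arcs. -/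
def arcSum (M : MixedGraph V) {u v : V} (w : M.graph.Walk u v) : ℤ :=
  (w.darts.map fun d => M.arcSign d.fst d.snd).sum

variable {M : MixedGraph V} {u v x : V}

theorem arcSign_swap (M : MixedGraph V) (u v : V) : M.arcSign v u = -M.arcSign u v := by
  have := M.arc_antisymm u v
  grind [arcSign]

theorem arcSum_append (w : M.graph.Walk u v) (w' : M.graph.Walk v x) :
    M.arcSum (w.append w') = M.arcSum w + M.arcSum w' := by
  simp only [arcSum, Walk.darts_append, List.map_append, List.sum_append]

theorem arcSum_reverse (w : M.graph.Walk u v) : M.arcSum w.reverse = -M.arcSum w := by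
  induction w with
  | nil => rfl
  | @cons u v _ h w ih =>
    rw [Walk.reverse_cons, arcSum_append, ih]
    simp [arcSum, M.arcSign_swap u v, add_comm]

theorem arcSum_rotate (w : M.graph.Walk u u) (hx : x ∈ w.support) :
    M.arcSum (w.rotate x hx) = M.arcSum w :=
  ((w.rotate_darts x hx).perm.map _).sum_eq

theorem walkSignature_eq (w : M.graph.Walk u u) : walkSignature M w = (M.arcSum w).natAbs := by
  rw [walkSignature, arcSum]
  congr 1
  induction w.darts with
  | nil => rfl
  | cons d l ih =>
    have := M.arc_antisymm d.fst d.snd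
    rw [List.map_cons, List.sum_cons, ← ih, arcSign]
    grind

theorem cycleSig_toSubgraph_iff {w : M.graph.Walk u u} (hw : w.IsCycle) {P : ℕ → Prop} :
    CycleSig M w.toSubgraph P ↔ P (M.arcSum w).natAbs := by
  rw [← walkSignature_eq]
  refine ⟨fun ⟨v, w', hw', hverts, hedges, hP⟩ => ?_,
    fun hP => ⟨u, w, hw, w.verts_toSubgraph.symm, w.edgeSet_toSubgraph.symm, hP⟩⟩
  have hu : u ∈ w'.support := by
    have hu : u ∈ w.toSubgraph.verts := w.start_mem_verts_toSubgraph
    rwa [← hverts] at hu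
  have hsub : w.toSubgraph = (w'.rotate u hu).toSubgraph := by
    rw [Walk.toSubgraph_rotate]
    refine Subgraph.ext (hverts.symm.trans w'.verts_toSubgraph.symm) ?_
    ext x y
    rw [← Subgraph.mem_edgeSet, ← hedges, Walk.adj_toSubgraph_iff_mem_edges, Set.mem_ofPred_eq]
  rw [walkSignature_eq] at hP ⊢
  rcases eq_or_eq_reverse_of_toSubgraph_eq hw (hw'.rotate hu) hsub with rfl | rfl
  · rwa [arcSum_rotate]
  · rwa [arcSum_reverse, arcSum_rotate, Int.natAbs_neg]

end MixedGraph

theorem IsCycleSubgraph.exists_adj {G : SimpleGraph V} {C : G.Subgraph} (hC : IsCycleSubgraph C)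
    {v : V} (hv : v ∈ C.verts) : ∃ x, C.Adj v x :=
  Set.nonempty_of_ncard_ne_zero ((hC.2 v hv).trans_ne two_ne_zero)

theorem IsCycleSubgraph.neighborSet_eq {G : SimpleGraph V} {C : G.Subgraph}
    (hC : IsCycleSubgraph C) {v x y : V} (hv : v ∈ C.verts) (h : G.neighborSet v = {x, y}) :
    C.neighborSet v = {x, y} :=
  Set.eq_of_subset_of_ncard_le (h ▸ C.neighborSet_subset v)
    ((Set.ncard_insert_le x {y}).trans (by rw [Set.ncard_singleton]; exact (hC.2 v hv).ge))

theorem toSubgraph_append_reverse {G : SimpleGraph V} {a b : V} (w w' : G.Walk a b) :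
    (w.append w'.reverse).toSubgraph = w.toSubgraph ⊔ w'.toSubgraph := by
  rw [Walk.toSubgraph_append, Walk.toSubgraph_reverse]

namespace IsGeneralizedTheta

variable {ι : Type*} {G : SimpleGraph V} {a b : V} {W : ι → G.Walk a b}

theorem isCycle_append_reverse (hW : IsGeneralizedTheta W) {j j' : ι} (h : j ≠ j') :
    ((W j).append (W j').reverse).IsCycle := by
  refine (hW.isPath j).isCycle_append (hW.isPath j').reverse (fun v hv hv' => ?_) ?_
  · have ha := start_notMem_tail_support (hW.isPath j)
    have hb := start_notMem_tail_support (hW.isPath j').reverse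
    have hv₁ := List.mem_of_mem_tail hv
    have hv₂ := List.mem_of_mem_tail hv'
    rw [Walk.support_reverse, List.mem_reverse] at hv₂
    rcases hW.eq_or_eq h v hv₁ hv₂ with rfl | rfl
    exacts [ha hv, hb hv']
  · rw [Walk.length_reverse]
    exact hW.one_lt_length h

theorem toSubgraph_le_of_adj (hW : IsGeneralizedTheta W) {C : G.Subgraph}
    (hC : IsCycleSubgraph C) {j : ι} {x y : V} (hj : (W j).toSubgraph.Adj x y) (h : C.Adj x y) :
    (W j).toSubgraph ≤ C := by
  have hpropagate (k : ℕ) (hk : k < (W j).length) :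
      s((W j).getVert k, (W j).getVert (k + 1)) ∈ C.edgeSet ↔ s(a, (W j).snd) ∈ C.edgeSet := by
    induction k with
    | zero => simp
    | succ k ih =>
      rw [← ih (by omega), Subgraph.mem_edgeSet, Subgraph.mem_edgeSet]
      have hnbrs := hW.neighborSet_getVert k.succ_ne_zero hk
      refine ⟨fun hadj => ?_, fun hadj => ?_⟩
      · exact ((hC.neighborSet_eq hadj.fst_mem hnbrs).symm.subset (.inl rfl)).symm
      · exact (hC.neighborSet_eq hadj.snd_mem hnbrs).symm.subset (.inr rfl)
  have hstart : s(a, (W j).snd) ∈ C.edgeSet := by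
    obtain ⟨k, hxy, hk⟩ := (W j).toSubgraph_adj_iff.1 hj
    rwa [← hpropagate k hk, hxy, Subgraph.mem_edgeSet]
  rw [Walk.toSubgraph_le_iff (Walk.not_nil_of_ne hW.ne)]
  intro e he
  induction e with | _ x y
  obtain ⟨k, hk, hxy⟩ := (W j).mk_mem_edges_iff_exists.1 he
  exact hxy ▸ (hpropagate k hk).2 hstart

theorem exists_toSubgraph_le (hW : IsGeneralizedTheta W) {C : G.Subgraph}
    (hC : IsCycleSubgraph C) {x y : V} (h : C.Adj x y) :
    ∃ j, (W j).toSubgraph ≤ C ∧ (W j).toSubgraph.Adj x y :=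
  let ⟨j, hj⟩ := hW.exists_adj x y h.adj_sub
  ⟨j, hW.toSubgraph_le_of_adj hC hj h, hj⟩

theorem ncard_toSubgraph_le (hW : IsGeneralizedTheta W) {C : G.Subgraph}
    (hC : IsCycleSubgraph C) : {j | (W j).toSubgraph ≤ C}.ncard = 2 := by
  have hnil (j : ι) : ¬(W j).Nil := Walk.not_nil_of_ne hW.ne
  have ha : a ∈ C.verts := by
    obtain ⟨v, hv⟩ := hC.1.nonempty
    obtain ⟨x, hx⟩ := hC.exists_adj hv
    obtain ⟨j, hj, -⟩ := hW.exists_toSubgraph_le hC hx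
    exact hj.1 (W j).start_mem_verts_toSubgraph
  have hnbrs : C.neighborSet a = (fun j => (W j).snd) '' {j | (W j).toSubgraph ≤ C} := by
    ext y
    constructor
    · intro hy
      obtain ⟨j, hj, hadj⟩ := hW.exists_toSubgraph_le hC hy
      have hsnd := (hW.isPath j).neighborSet_toSubgraph_startpoint (hnil j)
      exact ⟨j, hj, (hsnd.subset hadj).symm⟩
    · rintro ⟨j, hj, rfl⟩
      exact hj.2 ((W j).toSubgraph_adj_snd (hnil j))
  rw [← Set.ncard_image_of_injective _ hW.snd_injective, ← hnbrs]
  exact hC.2 a ha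

theorem isCycleSubgraph_iff (hW : IsGeneralizedTheta W) {C : G.Subgraph} :
    IsCycleSubgraph C ↔ ∃ j j', j ≠ j' ∧ C = (W j).toSubgraph ⊔ (W j').toSubgraph := by
  constructor
  · intro hC
    obtain ⟨j, j', hne, hjj'⟩ := Set.ncard_eq_two.1 (hW.ncard_toSubgraph_le hC)
    have hsup_le : (W j).toSubgraph ⊔ (W j').toSubgraph ≤ C :=
      sup_le (hjj'.symm.subset (.inl rfl)) (hjj'.symm.subset (.inr rfl))
    have hadj (x y : V) (h : C.Adj x y) : ((W j).toSubgraph ⊔ (W j').toSubgraph).Adj x y := by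
      obtain ⟨k, hk, hxy⟩ := hW.exists_toSubgraph_le hC h
      rcases hjj'.subset hk with rfl | rfl
      exacts [.inl hxy, .inr hxy]
    have hverts : C.verts ⊆ ((W j).toSubgraph ⊔ (W j').toSubgraph).verts := fun v hv =>
      let ⟨x, hx⟩ := hC.exists_adj hv
      (hadj v x hx).fst_mem
    exact ⟨j, j', hne, le_antisymm (And.intro hverts hadj) hsup_le⟩
  · rintro ⟨j, j', hne, rfl⟩
    rw [← toSubgraph_append_reverse]
    exact isCycleSubgraph_toSubgraph (hW.isCycle_append_reverse hne)

theorem ncard_verts_sup (hW : IsGeneralizedTheta W) {j j' : ι} (h : j ≠ j') :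
    ((W j).toSubgraph ⊔ (W j').toSubgraph).verts.ncard = (W j).length + (W j').length := by
  rw [← toSubgraph_append_reverse, ncard_verts_toSubgraph (hW.isCycle_append_reverse h),
    Walk.length_append, Walk.length_reverse]

theorem cycleSig_sup_iff {M : MixedGraph V} {W : ι → M.graph.Walk a b}
    (hW : IsGeneralizedTheta W) {j j' : ι} (h : j ≠ j') {P : ℕ → Prop} :
    CycleSig M ((W j).toSubgraph ⊔ (W j').toSubgraph) P ↔
      P (M.arcSum (W j) - M.arcSum (W j')).natAbs := by
  rw [← toSubgraph_append_reverse, M.cycleSig_toSubgraph_iff (hW.isCycle_append_reverse h),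
    M.arcSum_append, M.arcSum_reverse, sub_eq_add_neg]

theorem oddCyclesSig_iff {M : MixedGraph V} {W : ι → M.graph.Walk a b}
    (hW : IsGeneralizedTheta W) {P : ℕ → Prop} :
    OddCyclesSig M P ↔ ∀ j j', j ≠ j' → Odd ((W j).length + (W j').length) →
      P (M.arcSum (W j) - M.arcSum (W j')).natAbs := by
  simp only [OddCyclesSig, hW.isCycleSubgraph_iff]
  constructor
  · intro h j j' hne hodd
    refine (hW.cycleSig_sup_iff hne).1 ?_
    exact h _ ⟨j, j', hne, rfl⟩ (by rwa [hW.ncard_verts_sup hne])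
  · rintro h _ ⟨j, j', hne, rfl⟩ hodd
    rw [hW.ncard_verts_sup hne] at hodd
    exact (hW.cycleSig_sup_iff hne).2 (h j j' hne hodd)

theorem evenCyclesSig_iff {M : MixedGraph V} {W : ι → M.graph.Walk a b}
    (hW : IsGeneralizedTheta W) {P : ℕ → ℕ → Prop} :
    EvenCyclesSig M P ↔ ∀ j j', j ≠ j' → Even ((W j).length + (W j').length) →
      P ((W j).length + (W j').length) (M.arcSum (W j) - M.arcSum (W j')).natAbs := by
  simp only [EvenCyclesSig, hW.isCycleSubgraph_iff]
  constructor
  · intro h j j' hne heven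
    refine (hW.cycleSig_sup_iff hne).1 ?_
    rw [← hW.ncard_verts_sup hne]
    exact h _ ⟨j, j', hne, rfl⟩ (by rwa [hW.ncard_verts_sup hne])
  · rintro h _ ⟨j, j', hne, rfl⟩ heven
    rw [hW.ncard_verts_sup hne] at heven ⊢
    exact (hW.cycleSig_sup_iff hne).2 (h j j' hne heven)

section OddEvenEven

theorem even_length_add_length_iff {W : Fin 3 → G.Walk a b} (h₀ : Odd (W 0).length)
    (h₁ : Even (W 1).length) (h₂ : Even (W 2).length) {j j' : Fin 3} (hne : j ≠ j') :
    Even ((W j).length + (W j').length) ↔ s(j, j') = s(1, 2) := by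
  rw [Nat.even_add]
  have hodd : ¬Even (W 0).length := Nat.not_even_iff_odd.2 h₀
  fin_cases j <;> fin_cases j' <;> simp [hodd, h₁, h₂] at hne ⊢

theorem evenCycleCount_eq_one {W : Fin 3 → G.Walk a b} (hW : IsGeneralizedTheta W)
    (h₀ : Odd (W 0).length) (h₁ : Even (W 1).length) (h₂ : Even (W 2).length) :
    evenCycleCount G = 1 := by
  rw [evenCycleCount, Set.ncard_eq_one]
  refine ⟨(W 1).toSubgraph ⊔ (W 2).toSubgraph, Set.ext fun C => ?_⟩
  simp only [Set.mem_ofPred_eq, Set.mem_singleton_iff, hW.isCycleSubgraph_iff]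
  constructor
  · rintro ⟨⟨j, j', hne, rfl⟩, heven⟩
    rw [hW.ncard_verts_sup hne, even_length_add_length_iff h₀ h₁ h₂ hne, Sym2.eq_iff] at heven
    obtain ⟨rfl, rfl⟩ | ⟨rfl, rfl⟩ := heven
    exacts [rfl, sup_comm _ _]
  · rintro rfl
    refine ⟨⟨1, 2, by decide, rfl⟩, ?_⟩
    rw [hW.ncard_verts_sup (by decide)]
    exact h₁.add h₂

variable {M : MixedGraph V} {W : Fin 3 → M.graph.Walk a b}

theorem oddCyclesSig_iff_and (hW : IsGeneralizedTheta W) (h₀ : Odd (W 0).length)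
    (h₁ : Even (W 1).length) (h₂ : Even (W 2).length) {P : ℕ → Prop} :
    OddCyclesSig M P ↔ P (M.arcSum (W 0) - M.arcSum (W 1)).natAbs ∧
      P (M.arcSum (W 0) - M.arcSum (W 2)).natAbs := by
  rw [hW.oddCyclesSig_iff]
  refine ⟨fun h => ⟨h 0 1 (by decide) (h₀.add_even h₁), h 0 2 (by decide) (h₀.add_even h₂)⟩, ?_⟩
  rintro ⟨h₀₁, h₀₂⟩ j j' hne hodd
  have h₁₀ := h₀₁
  have h₂₀ := h₀₂
  rw [← Int.natAbs_neg, neg_sub] at h₁₀ h₂₀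
  rw [← Nat.not_even_iff_odd, even_length_add_length_iff h₀ h₁ h₂ hne] at hodd
  fin_cases j <;> fin_cases j' <;> simp_all

theorem evenCyclesSig_iff_apply (hW : IsGeneralizedTheta W) (h₀ : Odd (W 0).length)
    (h₁ : Even (W 1).length) (h₂ : Even (W 2).length) {P : ℕ → ℕ → Prop} :
    EvenCyclesSig M P ↔
      P ((W 1).length + (W 2).length) (M.arcSum (W 1) - M.arcSum (W 2)).natAbs := by
  rw [hW.evenCyclesSig_iff]
  refine ⟨fun h => h 1 2 (by decide) (h₁.add h₂), fun h₁₂ j j' hne heven => ?_⟩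
  rw [even_length_add_length_iff h₀ h₁ h₂ hne, Sym2.eq_iff] at heven
  obtain ⟨rfl, rfl⟩ | ⟨rfl, rfl⟩ := heven
  · exact h₁₂
  · rwa [add_comm, ← Int.natAbs_neg, neg_sub]

end OddEvenEven

end IsGeneralizedTheta

namespace MixedGraph

section Gauge

variable {M : MixedGraph V} {a b : V}

/-- The exponent of `I` by which a kernel vector is rescaled at the end of a walk: the arc sum,
minus the length so that the eigenvalue equation along a path becomes a two-step recurrence. -/
def phase (M : MixedGraph V) {u v : V} (w : M.graph.Walk u v) : ℤ :=
  M.arcSum w - w.length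

/-- The value of `f` at the `i`-th vertex of a walk, rescaled by the phase of the initial segment
up to that vertex. -/
noncomputable def gauge (M : MixedGraph V) {u v : V} (w : M.graph.Walk u v) (f : V → ℂ) (i : ℕ) :
    ℂ :=
  I ^ M.phase (w.take i) * f (w.getVert i)

theorem phase_take_succ (w : M.graph.Walk a b) {i : ℕ} (hi : i < w.length) :
    M.phase (w.take (i + 1)) =
      M.phase (w.take i) + M.arcSign (w.getVert i) (w.getVert (i + 1)) - 1 := by
  have hi' : i < (w.darts.map fun d => M.arcSign d.fst d.snd).length := by simpa using hi
  simp only [phase, arcSum, Walk.darts_take, List.map_take, List.sum_take_succ _ _ hi',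
    Walk.take_length, List.getElem_map, Walk.darts_getElem_eq_getVert]
  grind

theorem phase_take_length (w : M.graph.Walk a b) : M.phase (w.take w.length) = M.phase w := by
  simp only [phase, arcSum, Walk.darts_take, Walk.take_length, min_self,
    List.take_of_length_le w.length_darts.le]

theorem gauge_zero (w : M.graph.Walk a b) (f : V → ℂ) : M.gauge w f 0 = f a := by
  simp [gauge, phase, arcSum]

theorem eq_zpow_mul_gauge (w : M.graph.Walk a b) (f : V → ℂ) (i : ℕ) :
    f (w.getVert i) = I ^ (-M.phase (w.take i)) * M.gauge w f i := by
  rw [gauge, ← mul_assoc, ← zpow_add₀ Complex.I_ne_zero, neg_add_cancel, zpow_zero, one_mul]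

theorem gauge_length (w : M.graph.Walk a b) (f : V → ℂ) :
    I ^ (-M.phase w) * M.gauge w f w.length = f b := by
  rw [← phase_take_length, ← eq_zpow_mul_gauge, Walk.getVert_length]

end Gauge

section HMatrix

variable [Fintype V] [DecidableEq V] {M : MixedGraph V} {a b : V}

theorem hMatrix_apply_of_adj {u v : V} (h : M.graph.Adj u v) :
    M.hMatrix u v = I ^ M.arcSign u v := by
  simp only [hMatrix, arcSign, h, if_true]
  split_ifs <;> simp

theorem hMatrix_apply_of_not_adj {u v : V} (h : ¬M.graph.Adj u v) : M.hMatrix u v = 0 := by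
  rw [hMatrix, if_neg (mt (M.arc_adj u v) h), if_neg fun h' => h (M.arc_adj v u h').symm,
    if_neg h]

theorem hMatrix_mulVec_apply (f : V → ℂ) {u : V} {s : Finset V}
    (hs : M.graph.neighborSet u = s) :
    (M.hMatrix.mulVec f) u = ∑ v ∈ s, M.hMatrix u v * f v := by
  refine (Finset.sum_subset s.subset_univ fun v _ hv => ?_).symm
  have hadj : ¬M.graph.Adj u v := fun h => hv (Finset.mem_coe.1 (hs ▸ h))
  exact mul_eq_zero_of_left (hMatrix_apply_of_not_adj hadj) (f v)

theorem hMatrix_mul_getVert_succ (w : M.graph.Walk a b) (f : V → ℂ) {i : ℕ} (hi : i < w.length) :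
    M.hMatrix (w.getVert i) (w.getVert (i + 1)) * f (w.getVert (i + 1)) =
      I ^ (-M.phase (w.take i)) * (I * M.gauge w f (i + 1)) := by
  rw [hMatrix_apply_of_adj (w.adj_getVert_succ hi), gauge, ← mul_assoc, ← mul_assoc,
    ← zpow_add_one₀ Complex.I_ne_zero, ← zpow_add₀ Complex.I_ne_zero, phase_take_succ w hi]
  congr 2
  ring

theorem hMatrix_mul_getVert_pred (w : M.graph.Walk a b) (f : V → ℂ) {i : ℕ} (hi : i < w.length) :
    M.hMatrix (w.getVert (i + 1)) (w.getVert i) * f (w.getVert i) =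
      -(I ^ (-M.phase (w.take (i + 1))) * (I * M.gauge w f i)) := by
  have hphase : -M.phase (w.take (i + 1)) + 1 + M.phase (w.take i) =
      M.arcSign (w.getVert (i + 1)) (w.getVert i) + 2 := by
    rw [phase_take_succ w hi, arcSign_swap]
    ring
  rw [hMatrix_apply_of_adj (w.adj_getVert_succ hi).symm, gauge, ← mul_assoc, ← mul_assoc,
    ← zpow_add_one₀ Complex.I_ne_zero, ← zpow_add₀ Complex.I_ne_zero, hphase,
    zpow_add₀ Complex.I_ne_zero, zpow_two, Complex.I_mul_I, mul_neg_one, neg_mul, neg_neg]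

end HMatrix

end MixedGraph

theorem I_zpow_eq_iff {m n : ℤ} : I ^ m = I ^ n ↔ 4 ∣ m - n := by
  rw [← div_eq_one_iff_eq (zpow_ne_zero n Complex.I_ne_zero), ← zpow_sub₀ Complex.I_ne_zero]
  exact Complex.isPrimitiveRoot_I.zpow_eq_one_iff_dvd (m - n)

theorem forall_add_two_eq_iff {α : Type*} {x : ℕ → α} {n : ℕ} :
    (∀ i, i + 1 < n → x (i + 2) = x i) ↔ ∀ i ≤ n, x i = if Even i then x 0 else x 1 := by
  refine ⟨fun h i hi => ?_, fun h i hi => ?_⟩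
  · induction i using Nat.twoStepInduction with
    | zero => rfl
    | one => rfl
    | more i ih _ =>
      rw [h i hi, ih (by omega)]
      simp only [Nat.even_add, even_two, iff_true]
  · rw [h (i + 2) hi, h i (by omega)]
    simp only [Nat.even_add, even_two, iff_true]

namespace IsGeneralizedTheta

variable {ι : Type*} {M : MixedGraph V} {a b : V} {W : ι → M.graph.Walk a b}

section Kernel

variable [Fintype V] [DecidableEq V]

theorem hMatrix_mulVec_getVert (hW : IsGeneralizedTheta W) (f : V → ℂ) {j : ι} {i : ℕ}
    (hi : i + 1 < (W j).length) :
    (M.hMatrix.mulVec f) ((W j).getVert (i + 1)) =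
      I ^ (-M.phase ((W j).take (i + 1))) *
        (I * (M.gauge (W j) f (i + 2) - M.gauge (W j) f i)) := by
  have hne : (W j).getVert i ≠ (W j).getVert (i + 2) := fun h => by
    have := (hW.isPath j).getVert_injOn (i.lt_succ_self.trans hi).le hi h
    omega
  have hnbrs : M.graph.neighborSet ((W j).getVert (i + 1)) =
      ({(W j).getVert i, (W j).getVert (i + 2)} : Finset V) := by
    rw [hW.neighborSet_getVert i.succ_ne_zero hi, Finset.coe_pair, Nat.succ_sub_one]
  rw [M.hMatrix_mulVec_apply f hnbrs, Finset.sum_pair hne,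
    M.hMatrix_mul_getVert_pred (W j) f (i.lt_succ_self.trans hi),
    M.hMatrix_mul_getVert_succ (W j) f hi]
  ring

theorem hMatrix_mulVec_start [Fintype ι] (hW : IsGeneralizedTheta W) (f : V → ℂ) :
    (M.hMatrix.mulVec f) a = I * ∑ j, M.gauge (W j) f 1 := by
  have hnbrs : M.graph.neighborSet a = Finset.univ.image fun j => (W j).snd := by
    rw [hW.neighborSet_start, Finset.coe_image, Finset.coe_univ, Set.image_univ]
  rw [M.hMatrix_mulVec_apply f hnbrs, Finset.sum_image hW.snd_injective.injOn, Finset.mul_sum]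
  refine Finset.sum_congr rfl fun j _ => ?_
  simpa [MixedGraph.phase, MixedGraph.arcSum] using
    M.hMatrix_mul_getVert_succ (W j) f (hW.length_pos j)

theorem hMatrix_mulVec_end [Fintype ι] (hW : IsGeneralizedTheta W) (f : V → ℂ) :
    (M.hMatrix.mulVec f) b = -I *
      ∑ j, I ^ (-M.phase (W j)) * M.gauge (W j) f ((W j).length - 1) := by
  have hnbrs : M.graph.neighborSet b = Finset.univ.image fun j => (W j).penultimate := by
    rw [hW.neighborSet_end, Finset.coe_image, Finset.coe_univ, Set.image_univ]
  rw [M.hMatrix_mulVec_apply f hnbrs, Finset.sum_image hW.penultimate_injective.injOn,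
    Finset.mul_sum]
  refine Finset.sum_congr rfl fun j _ => ?_
  have hpred := M.hMatrix_mul_getVert_pred (W j) f (Nat.sub_one_lt_of_lt (hW.length_pos j))
  rw [Nat.sub_add_cancel (hW.length_pos j), M.phase_take_length, Walk.getVert_length] at hpred
  rw [Walk.penultimate, hpred]
  ring

theorem gauge_add_two (hW : IsGeneralizedTheta W) {f : V → ℂ} (hf : M.hMatrix.mulVec f = 0) {j : ι}
    {i : ℕ} (hi : i + 1 < (W j).length) : M.gauge (W j) f (i + 2) = M.gauge (W j) f i := by
  have hinterior := hW.hMatrix_mulVec_getVert f hi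
  have hI := Complex.I_ne_zero
  rw [hf, Pi.zero_apply, zero_eq_mul, or_iff_right (zpow_ne_zero _ hI)] at hinterior
  exact sub_eq_zero.1 (eq_zero_of_ne_zero_of_mul_left_eq_zero hI hinterior)

theorem apply_end_eq (hW : IsGeneralizedTheta W) {f : V → ℂ} (hf : M.hMatrix.mulVec f = 0)
    (j : ι) :
    f b = I ^ (-M.phase (W j)) * if Even (W j).length then f a else M.gauge (W j) f 1 := by
  have hgauge := forall_add_two_eq_iff.1 (fun _ => hW.gauge_add_two hf) (W j).length le_rfl
  rw [← M.gauge_zero (W j) f, ← hgauge, M.gauge_length]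

theorem hMatrix_mulVec_eq_zero_iff [Fintype ι] (hW : IsGeneralizedTheta W) {f : V → ℂ} :
    M.hMatrix.mulVec f = 0 ↔
      (∀ j, ∀ i, i + 1 < (W j).length → M.gauge (W j) f (i + 2) = M.gauge (W j) f i) ∧
      ∑ j, M.gauge (W j) f 1 = 0 ∧
      ∑ j, I ^ (-M.phase (W j)) * M.gauge (W j) f ((W j).length - 1) = 0 := by
  constructor
  · intro hf
    refine ⟨fun j i => hW.gauge_add_two hf, ?_, ?_⟩
    · have ha := hW.hMatrix_mulVec_start f
      rw [hf, Pi.zero_apply, zero_eq_mul] at ha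
      exact ha.resolve_left Complex.I_ne_zero
    · have hb := hW.hMatrix_mulVec_end f
      rw [hf, Pi.zero_apply, zero_eq_mul] at hb
      exact hb.resolve_left (neg_ne_zero.2 Complex.I_ne_zero)
  · rintro ⟨hrec, ha, hb⟩
    ext v
    obtain ⟨j, i, hi, rfl⟩ := hW.exists_getVert_eq v
    rcases i with _ | i
    · rw [Walk.getVert_zero, hW.hMatrix_mulVec_start, ha, mul_zero, Pi.zero_apply]
    rcases hi.eq_or_lt with hi | hi
    · rw [hi, Walk.getVert_length, hW.hMatrix_mulVec_end, hb, mul_zero, Pi.zero_apply]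
    · rw [hW.hMatrix_mulVec_getVert f hi, hrec j i hi, sub_self, mul_zero, mul_zero, Pi.zero_apply]

theorem hMatrix_mulVec_eq_zero_iff_eq_ite [Fintype ι] (hW : IsGeneralizedTheta W) {f : V → ℂ} :
    M.hMatrix.mulVec f = 0 ↔
      (∀ j, ∀ i ≤ (W j).length,
        M.gauge (W j) f i = if Even i then f a else M.gauge (W j) f 1) ∧
      ∑ j, M.gauge (W j) f 1 = 0 ∧
      ∑ j, I ^ (-M.phase (W j)) *
        (if Even (W j).length then M.gauge (W j) f 1 else f a) = 0 := by
  simp only [hW.hMatrix_mulVec_eq_zero_iff, forall_add_two_eq_iff, M.gauge_zero]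
  refine and_congr_right fun hgauge => and_congr_right fun _ => ?_
  have hpenultimate (j : ι) : M.gauge (W j) f ((W j).length - 1) =
      if Even (W j).length then M.gauge (W j) f 1 else f a := by
    rw [hgauge j _ (Nat.sub_le _ 1)]
    simp only [Nat.even_sub (hW.length_pos j), Nat.not_even_one, iff_false, ite_not]
  simp only [hpenultimate]

theorem exists_hMatrix_mulVec_eq_zero [Fintype ι] (hW : IsGeneralizedTheta W) {α β : ℂ}
    {t : ι → ℂ} (hβ : ∀ j, β = I ^ (-M.phase (W j)) * if Even (W j).length then α else t j)
    (hsum : ∑ j, t j = 0)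
    (hsum' : ∑ j, I ^ (-M.phase (W j)) * (if Even (W j).length then t j else α) = 0) :
    ∃ f, M.hMatrix.mulVec f = 0 ∧ f a = α ∧ ∀ j, M.gauge (W j) f 1 = t j := by
  obtain ⟨f, hf⟩ := hW.exists_forall_getVert_eq
    (fun j i => I ^ (-M.phase ((W j).take i)) * if Even i then α else t j)
    (fun j j' => by simp [MixedGraph.phase, MixedGraph.arcSum])
    (fun j j' => by rw [M.phase_take_length, M.phase_take_length, ← hβ, ← hβ])
  have hgauge (j : ι) {i : ℕ} (hi : i ≤ (W j).length) :
      M.gauge (W j) f i = if Even i then α else t j := by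
    rw [MixedGraph.gauge, hf j i hi, ← mul_assoc, ← zpow_add₀ Complex.I_ne_zero, add_neg_cancel,
      zpow_zero, one_mul]
  have hone (j : ι) : M.gauge (W j) f 1 = t j := by
    simpa using hgauge j (hW.length_pos j)
  have hstart : f a = α := by
    obtain ⟨j, -⟩ := hW.exists_mem_support a
    rw [← M.gauge_zero (W j) f, hgauge j (Nat.zero_le _), if_pos Even.zero]
  refine ⟨f, hW.hMatrix_mulVec_eq_zero_iff_eq_ite.2 ⟨fun j i hi => ?_, ?_, ?_⟩, hstart, hone⟩
  · rw [hgauge j hi, hone, hstart]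
  · simpa only [hone] using hsum
  · simpa only [hone, hstart] using hsum'

end Kernel

section OddEvenEven

variable [Fintype V] [DecidableEq V] {W : Fin 3 → M.graph.Walk a b}

/-- The map sending a kernel vector to its values at `a` and at the second vertex of `W 1`. -/
noncomputable def kerEval (W : Fin 3 → M.graph.Walk a b) :
    LinearMap.ker M.hMatrix.mulVecLin →ₗ[ℂ] ℂ × ℂ :=
  ((LinearMap.proj a).prod (LinearMap.proj (W 1).snd)).domRestrict _

theorem kerEval_injective (hW : IsGeneralizedTheta W) (h₀ : Odd (W 0).length) :
    Function.Injective (kerEval W) := by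
  rw [← LinearMap.ker_eq_bot, LinearMap.ker_eq_bot']
  rintro ⟨f, hf⟩ hval
  rw [LinearMap.mem_ker, Matrix.mulVecLin_apply] at hf
  obtain ⟨ha : f a = 0, hsnd : f (W 1).snd = 0⟩ := Prod.ext_iff.1 hval
  obtain ⟨hgauge, hsum, -⟩ := hW.hMatrix_mulVec_eq_zero_iff_eq_ite.1 hf
  have hgauge₁ : M.gauge (W 1) f 1 = 0 := mul_eq_zero_of_right _ hsnd
  have hb : f b = 0 := by rw [hW.apply_end_eq hf 1, ha, hgauge₁, ite_self, mul_zero]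
  have hgauge₀ : M.gauge (W 0) f 1 = 0 := by
    have hb' := hW.apply_end_eq hf 0
    rw [hb, if_neg (Nat.not_even_iff_odd.2 h₀), zero_eq_mul] at hb'
    exact hb'.resolve_left (zpow_ne_zero _ Complex.I_ne_zero)
  have hgauge₂ : M.gauge (W 2) f 1 = 0 := by
    rwa [Fin.sum_univ_three, hgauge₀, hgauge₁, zero_add, zero_add] at hsum
  have hone : ∀ j, M.gauge (W j) f 1 = 0 :=
    Fin.forall_fin_succ.2 ⟨hgauge₀, by simp [Fin.forall_fin_succ, hgauge₁, hgauge₂]⟩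
  refine Subtype.ext (funext fun v => ?_)
  obtain ⟨j, i, hi, rfl⟩ := hW.exists_getVert_eq v
  change f ((W j).getVert i) = 0
  rw [M.eq_zpow_mul_gauge (W j) f, hgauge j i hi, ha, hone, ite_self, mul_zero]

theorem zpow_phase_eq_of_kerEval_surjective (hW : IsGeneralizedTheta W) (h₀ : Odd (W 0).length)
    (h₁ : Even (W 1).length) (h₂ : Even (W 2).length) (hsurj : Function.Surjective (kerEval W)) :
    I ^ (-M.phase (W 1)) = I ^ (-M.phase (W 2)) ∧
      (I ^ (-M.phase (W 0))) ^ 2 = (I ^ (-M.phase (W 1))) ^ 2 := by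
  obtain ⟨⟨f, hf⟩, hval⟩ := hsurj (1, 0)
  rw [LinearMap.mem_ker, Matrix.mulVecLin_apply] at hf
  obtain ⟨ha : f a = 1, hsnd : f (W 1).snd = 0⟩ := Prod.ext_iff.1 hval
  have hgauge₁ : M.gauge (W 1) f 1 = 0 := mul_eq_zero_of_right _ hsnd
  obtain ⟨-, hsum, hsum'⟩ := hW.hMatrix_mulVec_eq_zero_iff_eq_ite.1 hf
  have hb₀ : f b = I ^ (-M.phase (W 0)) * M.gauge (W 0) f 1 := by
    rw [hW.apply_end_eq hf 0, if_neg (Nat.not_even_iff_odd.2 h₀)]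
  have hb₁ : f b = I ^ (-M.phase (W 1)) := by rw [hW.apply_end_eq hf 1, if_pos h₁, ha, mul_one]
  have hb₂ : f b = I ^ (-M.phase (W 2)) := by rw [hW.apply_end_eq hf 2, if_pos h₂, ha, mul_one]
  rw [Fin.sum_univ_three, hgauge₁, add_zero] at hsum
  rw [Fin.sum_univ_three, if_neg (Nat.not_even_iff_odd.2 h₀), if_pos h₁, if_pos h₂, ha, hgauge₁,
    mul_one, mul_zero, add_zero, ← hb₂] at hsum'
  refine ⟨hb₁.symm.trans hb₂, ?_⟩
  rw [← hb₁]
  linear_combination (I ^ (-M.phase (W 0))) * hsum' - f b * I ^ (-M.phase (W 0)) * hsum - f b * hb₀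

theorem kerEval_surjective (hW : IsGeneralizedTheta W) (h₀ : Odd (W 0).length)
    (h₁ : Even (W 1).length) (h₂ : Even (W 2).length)
    (h₁₂ : I ^ (-M.phase (W 1)) = I ^ (-M.phase (W 2)))
    (h₀₁ : (I ^ (-M.phase (W 0))) ^ 2 = (I ^ (-M.phase (W 1))) ^ 2) :
    Function.Surjective (kerEval W) := by
  rintro ⟨α, γ⟩
  have hodd : ¬Even (W 0).length := Nat.not_even_iff_odd.2 h₀
  set z := fun j => I ^ (-M.phase (W j))
  set t₀ := z 1 / z 0 * α
  set t₁ := I ^ M.phase ((W 1).take 1) * γ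
  have hz : z 0 ≠ 0 := zpow_ne_zero _ Complex.I_ne_zero
  have hz₀ : z 0 * t₀ = z 1 * α := by rw [← mul_assoc, mul_div_cancel₀ _ hz]
  have hz₁ : z 1 * t₀ = z 0 * α := by
    refine mul_left_cancel₀ hz ?_
    linear_combination z 1 * hz₀ - α * h₀₁
  have hβ (j : Fin 3) :
      z 1 * α = z j * if Even (W j).length then α else ![t₀, t₁, -t₀ - t₁] j := by
    fin_cases j
    · exact hz₀.symm.trans (congrArg _ (if_neg hodd).symm)
    · exact congrArg _ (if_pos h₁).symm
    · exact congrArg₂ _ h₁₂ (if_pos h₂).symm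
  obtain ⟨f, hf, ha, hone⟩ := hW.exists_hMatrix_mulVec_eq_zero hβ
    (by simp [Fin.sum_univ_three])
    (by
      simp only [Fin.sum_univ_three, hodd, h₁, h₂, if_true, if_false, Matrix.cons_val]
      linear_combination (t₀ + t₁) * h₁₂ - hz₁)
  refine ⟨⟨f, hf⟩, Prod.ext ha ?_⟩
  exact mul_left_cancel₀ (zpow_ne_zero _ Complex.I_ne_zero) (hone 1)

theorem finrank_ker_eq_two_iff (hW : IsGeneralizedTheta W) (h₀ : Odd (W 0).length)
    (h₁ : Even (W 1).length) (h₂ : Even (W 2).length) :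
    Module.finrank ℂ (LinearMap.ker M.hMatrix.mulVecLin) = 2 ↔
      4 ∣ M.phase (W 1) - M.phase (W 2) ∧ 2 ∣ M.phase (W 0) - M.phase (W 1) := by
  have hinj := kerEval_injective hW h₀
  have hsurj : Function.Surjective (kerEval W) ↔
      I ^ (-M.phase (W 1)) = I ^ (-M.phase (W 2)) ∧
        (I ^ (-M.phase (W 0))) ^ 2 = (I ^ (-M.phase (W 1))) ^ 2 :=
    ⟨zpow_phase_eq_of_kerEval_surjective hW h₀ h₁ h₂,
      fun ⟨h₁₂, h₀₁⟩ => kerEval_surjective hW h₀ h₁ h₂ h₁₂ h₀₁⟩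
  have hfinrank : Module.finrank ℂ (LinearMap.ker M.hMatrix.mulVecLin) =
      Module.finrank ℂ (ℂ × ℂ) ↔ Function.Surjective (kerEval W) :=
    ⟨fun h => (LinearMap.injective_iff_surjective_of_finrank_eq_finrank h).1 hinj,
      fun h => (LinearEquiv.ofBijective _ ⟨hinj, h⟩).finrank_eq⟩
  rw [Module.finrank_prod, Module.finrank_self, one_add_one_eq_two, hsurj] at hfinrank
  rw [hfinrank]
  simp only [← zpow_natCast, ← zpow_mul, I_zpow_eq_iff]
  push_cast
  omega

theorem hRank_add_two_eq_card_iff (hW : IsGeneralizedTheta W) (h₀ : Odd (W 0).length)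
    (h₁ : Even (W 1).length) (h₂ : Even (W 2).length) :
    M.hRank + 2 = Fintype.card V ↔
      4 ∣ M.phase (W 1) - M.phase (W 2) ∧ 2 ∣ M.phase (W 0) - M.phase (W 1) := by
  have hrank : M.hRank + Module.finrank ℂ (LinearMap.ker M.hMatrix.mulVecLin) =
      Fintype.card V := by
    rw [← Module.finrank_fintype_fun_eq_card ℂ,
      ← M.hMatrix.mulVecLin.finrank_range_add_finrank_ker]
    rfl
  rw [← hrank, Nat.add_left_cancel_iff, eq_comm, hW.finrank_ker_eq_two_iff h₀ h₁ h₂]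

end OddEvenEven

end IsGeneralizedTheta

end

/-- Let G̃ be a mixed bicyclic graph with underlying graph
θ(p,l,q), p even, l and q odd. Then r(G̃) = 2m(G) − 2κ(G) iff the two odd cycles of
G̃ have odd signatures and the even cycle C̃_{q+l−2} satisfies
q + l + σ(C̃_{q+l−2}) ≡ 2 (mod 4). -/
theorem theta_hRank_eq_lower_bound_iff
    {V : Type u} [Fintype V] [DecidableEq V] (M : MixedGraph V) (p l q : ℕ)
    (hp : Even p) (hl : Odd l) (hq : Odd q) (hG : IsThetaGraph M.graph p l q) :
    (M.hRank : ℤ) =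
        2 * (matchingNumber M.graph : ℤ) - 2 * (evenCycleCount M.graph : ℤ) ↔
      (OddCyclesSig M Odd ∧ EvenCyclesSig M (fun _ s => (q + l + s) % 4 = 2)) := by
  obtain ⟨a, b, W, hW, hlen₀, hlen₁, hlen₂⟩ := hG.exists_isGeneralizedTheta
  obtain ⟨hp₂, hl₂, hq₂, -⟩ := hG
  have h₀ : Odd (W 0).length := hlen₀ ▸ Nat.Even.sub_odd (by omega) hp odd_one
  have h₁ : Even (W 1).length := hlen₁ ▸ hl.tsub_odd odd_one
  have h₂ : Even (W 2).length := hlen₂ ▸ hq.tsub_odd odd_one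
  obtain ⟨N, hN⟩ := hW.exists_isPerfectMatching ((h₀.add_even h₁).add_even h₂)
  have hrank : (M.hRank : ℤ) = 2 * matchingNumber M.graph - 2 * evenCycleCount M.graph ↔
      M.hRank + 2 = Fintype.card V := by
    rw [← two_mul_matchingNumber hN, hW.evenCycleCount_eq_one h₀ h₁ h₂]
    omega
  rw [hrank, hW.hRank_add_two_eq_card_iff h₀ h₁ h₂, hW.oddCyclesSig_iff_and h₀ h₁ h₂,
    hW.evenCyclesSig_iff_apply h₀ h₁ h₂]
  simp only [MixedGraph.phase, hlen₀, hlen₁, hlen₂, Int.natAbs_odd, Int.odd_iff]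
  rw [Nat.even_iff] at hp
  rw [Nat.odd_iff] at hl hq
  omega

end MixedPaper
end

section
/- Let G~ be a connected mixed graph whose cycles are pairwise vertex-disjoint, with κ(G) = c(G) − 1 and c(G) ≥ 2, and suppose G~ has no pendant vertices and has a pendant odd cycle C~_q with odd signature. Let x be the unique vertex of degree 3 on C_q and let H~ = G~ − V(C_q) + x. Then r(G~) = 2m(G) − 2κ(G) if and only if r(H~) = 2m(H) − 2c(H). -/
open scoped Classical

namespace MixedPaper

universe u

variable {V : Type u}

/-!
Let the pendant cycle `C` have length `2 * k + 1`. Deleting its `2 * k` vertices other than `x`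
lowers the matching number by `k`: alternate edges of the path `C − x` extend any matching of the
remainder, and conversely the edges of a matching that meet a deleted vertex have all their ends on
`C`, so there are at most `k` of them. The cyclomatic number drops by one.

The `H`-rank drops by exactly `2 * k`, which is the linear algebra behind the equivalence. At a
deleted vertex the equation `(A f) v = 0` is a two-step recurrence along the cycle. As the length is
odd, it determines `f` on the deleted vertices by `f x`, and what those vertices contribute to row
`x` is a multiple of the sum of the two products of the entries of `A` along `C`, one for each
direction of travel. Reversing the direction replaces every `±i` by its negative, so an odd
signature makes these products opposite to each other: the contribution vanishes, and the kernel of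
`A` restricts isomorphically onto the kernel of the principal submatrix of the remainder.
-/

open scoped Matrix

section Recurrence

variable {R : Type*} [CommRing R]

theorem prod_range_two_mul (f : ℕ → R) (n : ℕ) :
    ∏ t ∈ Finset.range (2 * n), f t =
      (∏ j ∈ Finset.range n, f (2 * j)) * ∏ j ∈ Finset.range n, f (2 * j + 1) := by
  induction n with
  | zero => simp
  | succ n ih =>
    rw [Nat.mul_succ, Finset.prod_range_succ, Finset.prod_range_succ, ih,
      Finset.prod_range_succ, Finset.prod_range_succ]
    ring

theorem prod_mul_eq_of_recurrence {u v F : ℕ → R} {n : ℕ}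
    (hF : ∀ j < n, u j * F j + v j * F (j + 1) = 0) :
    (∏ j ∈ Finset.range n, v j) * F n = (-1) ^ n * (∏ j ∈ Finset.range n, u j) * F 0 := by
  induction n with
  | zero => simp
  | succ n ih =>
    rw [Finset.prod_range_succ, Finset.prod_range_succ]
    linear_combination (∏ j ∈ Finset.range n, v j) * hF n n.lt_succ_self -
      u n * ih fun j hj => hF j (hj.trans n.lt_succ_self)

variable [IsDomain R] {a b F : ℕ → R} {k : ℕ}

theorem eq_zero_of_two_step_recurrence (ha : ∀ t ≤ 2 * k, a t ≠ 0) (hb : ∀ t ≤ 2 * k, b t ≠ 0)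
    (hF : ∀ s < 2 * k, b s * F s + a (s + 1) * F (s + 2) = 0)
    (hfirst : F 0 = 0) (hlast : F (2 * k + 1) = 0) : ∀ t ≤ 2 * k + 1, F t = 0 := by
  have forward (s : ℕ) (hs : s < 2 * k) (h : F s = 0) : F (s + 2) = 0 := by
    simpa [h, ha (s + 1) (by omega)] using hF s hs
  have backward (s : ℕ) (hs : s < 2 * k) (h : F (s + 2) = 0) : F s = 0 := by
    simpa [h, hb s hs.le] using hF s hs
  have even (j : ℕ) (hj : j ≤ k) : F (2 * j) = 0 := by
    induction j with
    | zero => exact hfirst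
    | succ j ih => exact forward (2 * j) (by omega) (ih (by omega))
  have odd (j : ℕ) (hj : j ≤ k) : F (2 * j + 1) = 0 := by
    induction hj using Nat.decreasingInduction with
    | self => exact hlast
    | of_succ j hj ih => exact backward (2 * j + 1) (by omega) ih
  intro t ht
  rcases Nat.even_or_odd' t with ⟨j, rfl | rfl⟩
  · exact even j (by omega)
  · exact odd j (by omega)

-- The recurrence links the even-indexed entries in a chain from `F 0` to `F (2 * k)` and the
-- odd-indexed ones in a chain from `F 1` to `F (2 * k + 1) = F 0`; eliminating `F 0` between the
-- two chains turns `hprod` into the conclusion.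
theorem add_eq_zero_of_two_step_recurrence (ha : ∀ t ≤ 2 * k, a t ≠ 0)
    (hb : ∀ t ≤ 2 * k, b t ≠ 0) (hF : ∀ s < 2 * k, b s * F s + a (s + 1) * F (s + 2) = 0)
    (hclosed : F (2 * k + 1) = F 0)
    (hprod : ∏ t ∈ Finset.range (2 * k + 1), a t + ∏ t ∈ Finset.range (2 * k + 1), b t = 0) :
    a 0 * F 1 + b (2 * k) * F (2 * k) = 0 := by
  have even : (∏ j ∈ Finset.range k, a (2 * j + 1)) * F (2 * k) =
      (-1) ^ k * (∏ j ∈ Finset.range k, b (2 * j)) * F 0 :=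
    prod_mul_eq_of_recurrence (F := fun j => F (2 * j)) fun j hj => hF (2 * j) (by omega)
  have odd : (∏ j ∈ Finset.range k, a (2 * j + 1 + 1)) * F (2 * k + 1) =
      (-1) ^ k * (∏ j ∈ Finset.range k, b (2 * j + 1)) * F 1 :=
    prod_mul_eq_of_recurrence (F := fun j => F (2 * j + 1)) fun j hj => hF (2 * j + 1) (by omega)
  rw [Finset.prod_range_succ', prod_range_two_mul, Finset.prod_range_succ, prod_range_two_mul]
    at hprod
  rw [hclosed] at odd
  have sign : ((-1 : R) ^ k) * (-1) ^ k = 1 := by rw [← mul_pow]; simp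
  have ha' : ∏ j ∈ Finset.range k, a (2 * j + 1) ≠ 0 :=
    Finset.prod_ne_zero_iff.2 fun j hj => ha _ (by have := Finset.mem_range.1 hj; omega)
  have hb' : ∏ j ∈ Finset.range k, b (2 * j + 1) ≠ 0 :=
    Finset.prod_ne_zero_iff.2 fun j hj => hb _ (by have := Finset.mem_range.1 hj; omega)
  refine mul_left_cancel₀ (mul_ne_zero ha' hb') ?_
  generalize ∏ j ∈ Finset.range k, a (2 * j + 1) = a₁ at *
  generalize ∏ j ∈ Finset.range k, a (2 * j + 1 + 1) = a₂ at *
  generalize ∏ j ∈ Finset.range k, b (2 * j) = b₀ at *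
  generalize ∏ j ∈ Finset.range k, b (2 * j + 1) = b₁ at *
  linear_combination (-1) ^ k * F 0 * hprod - (-1) ^ k * a₁ * a 0 * odd
    - a₁ * a 0 * b₁ * F 1 * sign + b₁ * b (2 * k) * even

end Recurrence

section Rank

variable [Fintype V] {K : Type*} [Field K] {A : Matrix V V K} {S : Set V}

theorem exists_eqOn_and_mulVec_eq_zero
    (hinj : ∀ f : V → K, (∀ v ∈ S, f v = 0) → (∀ v ∉ S, (A *ᵥ f) v = 0) → f = 0) (g : V → K) :
    ∃ f : V → K, Set.EqOn f g S ∧ ∀ v ∉ S, (A *ᵥ f) v = 0 := by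
  let Φ : (V → K) →ₗ[K] V → K := LinearMap.pi fun v =>
    if v ∈ S then (LinearMap.proj v : (V → K) →ₗ[K] K) else LinearMap.proj v ∘ₗ A.mulVecLin
  have Φ_mem (f : V → K) {v : V} (hv : v ∈ S) : Φ f v = f v := by simp [Φ, hv]
  have Φ_not_mem (f : V → K) {v : V} (hv : v ∉ S) : Φ f v = (A *ᵥ f) v := by simp [Φ, hv]
  have Φ_injective : Function.Injective Φ := by
    rw [injective_iff_map_eq_zero]
    intro f hf
    exact hinj f (fun v hv => by rw [← Φ_mem f hv, hf, Pi.zero_apply])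
      (fun v hv => by rw [← Φ_not_mem f hv, hf, Pi.zero_apply])
  obtain ⟨f, hf⟩ := LinearMap.injective_iff_surjective.1 Φ_injective (S.indicator g)
  refine ⟨f, fun v hv => ?_, fun v hv => ?_⟩
  · rw [← Φ_mem f hv, hf, Set.indicator_of_mem hv]
  · rw [← Φ_not_mem f hv, hf, Set.indicator_of_notMem hv]

theorem mulVec_eq_submatrix_mulVec_add_sum [Fintype S] (A : Matrix V V K) (f : V → K) (v : S) :
    (A *ᵥ f) v = (A.submatrix ((↑) : S → V) ((↑) : S → V) *ᵥ fun u : S => f u) v +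
      ∑ u with u ∉ S, A v u * f u := by
  refine (Finset.sum_filter_add_sum_filter_not Finset.univ (· ∈ S) _).symm.trans ?_
  congr 1
  exact Finset.sum_subtype _ (by simp) _

theorem finrank_ker_mulVecLin_eq_of_restrict [Fintype S]
    (hinj : ∀ f : V → K, (∀ v ∈ S, f v = 0) → (∀ v ∉ S, (A *ᵥ f) v = 0) → f = 0)
    (hrow : ∀ f : V → K, (∀ v ∉ S, (A *ᵥ f) v = 0) →
      ∀ v ∈ S, ∑ u with u ∉ S, A v u * f u = 0) :
    Module.finrank K A.mulVecLin.ker =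
      Module.finrank K (A.submatrix ((↑) : S → V) ((↑) : S → V)).mulVecLin.ker := by
  let B := A.submatrix ((↑) : S → V) ((↑) : S → V)
  have mem_ker (f : V → K) : f ∈ A.mulVecLin.ker ↔ ∀ v, (A *ᵥ f) v = 0 := funext_iff
  have mem_ker' (g : S → K) : g ∈ B.mulVecLin.ker ↔ ∀ v, (B *ᵥ g) v = 0 := funext_iff
  have restrict_mulVec (f : V → K) (hf : ∀ v ∉ S, (A *ᵥ f) v = 0) (v : S) :
      (A *ᵥ f) v = (B *ᵥ fun u : S => f u) v := by
    rw [mulVec_eq_submatrix_mulVec_add_sum A f v, hrow f hf v v.2, add_zero]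
  let ρ : A.mulVecLin.ker →ₗ[K] B.mulVecLin.ker :=
    (LinearMap.funLeft K K ((↑) : S → V)).restrict fun f hf => (mem_ker' _).2 fun v =>
      (restrict_mulVec f (fun u _ => (mem_ker f).1 hf u) v).symm.trans ((mem_ker f).1 hf v)
  have ρ_injective : Function.Injective ρ := by
    rw [injective_iff_map_eq_zero]
    intro f hf
    exact Subtype.ext <| hinj f (fun v hv => congrFun (congrArg Subtype.val hf) ⟨v, hv⟩)
      fun v _ => (mem_ker f).1 f.2 v
  have ρ_surjective : Function.Surjective ρ := by
    intro g
    obtain ⟨f, hfg, hf⟩ :=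
      exists_eqOn_and_mulVec_eq_zero hinj (Function.extend ((↑) : S → V) (g : S → K) 0)
    have restrict_f : (fun w : S => f w) = g := funext fun w => by
      rw [hfg w.2, Subtype.val_injective.extend_apply]
    refine ⟨⟨f, (mem_ker f).2 fun v => ?_⟩, Subtype.ext restrict_f⟩
    by_cases hv : v ∈ S
    · rw [restrict_mulVec f hf ⟨v, hv⟩, restrict_f]
      exact (mem_ker' g).1 g.2 ⟨v, hv⟩
    · exact hf v hv
  exact (LinearEquiv.ofBijective ρ ⟨ρ_injective, ρ_surjective⟩).finrank_eq

theorem rank_eq_rank_submatrix_add_ncard_compl [Fintype S]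
    (hinj : ∀ f : V → K, (∀ v ∈ S, f v = 0) → (∀ v ∉ S, (A *ᵥ f) v = 0) → f = 0)
    (hrow : ∀ f : V → K, (∀ v ∉ S, (A *ᵥ f) v = 0) →
      ∀ v ∈ S, ∑ u with u ∉ S, A v u * f u = 0) :
    A.rank = (A.submatrix ((↑) : S → V) ((↑) : S → V)).rank + Sᶜ.ncard := by
  have hker := finrank_ker_mulVecLin_eq_of_restrict hinj hrow
  have hA := A.mulVecLin.finrank_range_add_finrank_ker
  have hB := (A.submatrix ((↑) : S → V) ((↑) : S → V)).mulVecLin.finrank_range_add_finrank_ker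
  have hcard := Set.ncard_add_ncard_compl S
  rw [Module.finrank_fintype_fun_eq_card, ← Nat.card_eq_fintype_card] at hA hB
  rw [Nat.card_coe_set_eq] at hB
  unfold Matrix.rank
  omega

end Rank

section PendantCycleWalk

variable {G : SimpleGraph V} {x v u : V} {w : G.Walk x x}

/-- A closed walk tracing a pendant cycle that is attached at its base point: every vertex of the
cycle other than the base point has degree 2 in `G`. The degree of the base point itself is left
arbitrary, and `Set.ncard` serves as the degree so that `G` need not be locally finite. -/
structure IsPendantCycleWalk (w : G.Walk x x) : Prop where
  isCycle : w.IsCycle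
  ncard_adj : ∀ v ∈ w.support, v ≠ x → {u | G.Adj v u}.ncard = 2

/-- The vertex set of the graph `G − V(C) + x` that is left after deleting the vertices of a closed
walk `C` other than its base point `x`. -/
def remainder (w : G.Walk x x) : Set V := {v | v ∈ w.support}ᶜ ∪ {x}

theorem notMem_remainder_iff : v ∉ remainder w ↔ v ∈ w.support ∧ v ≠ x := by
  simp [remainder, and_comm]

theorem base_mem_remainder (w : G.Walk x x) : x ∈ remainder w := Or.inr rfl

theorem getVert_mem_remainder_iff (hw : w.IsCycle) {t : ℕ} (ht : t ≤ w.length) :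
    w.getVert t ∈ remainder w ↔ t = 0 ∨ t = w.length := by
  rw [← hw.getVert_endpoint_iff ht, ← not_iff_not, notMem_remainder_iff]
  simp [w.getVert_mem_support t]

theorem exists_getVert_succ_of_notMem_remainder (hv : v ∉ remainder w) :
    ∃ t, t + 1 < w.length ∧ w.getVert (t + 1) = v := by
  obtain ⟨hv, hvx⟩ := notMem_remainder_iff.1 hv
  obtain ⟨t, rfl, ht⟩ := SimpleGraph.Walk.mem_support_iff_exists_getVert.1 hv
  have h0 : t ≠ 0 := by rintro rfl; exact hvx w.getVert_zero
  have hlast : t ≠ w.length := by rintro rfl; exact hvx w.getVert_length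
  obtain ⟨s, rfl⟩ := Nat.exists_eq_succ_of_ne_zero h0
  exact ⟨s, by omega, rfl⟩

theorem ncard_support_eq_length (hw : w.IsCycle) : {v | v ∈ w.support}.ncard = w.length := by
  have tail_toFinset : {v | v ∈ w.support} = (w.support.tail.toFinset : Set V) := by
    ext v
    rw [Set.mem_ofPred_eq, SimpleGraph.Walk.mem_support_iff, List.coe_toFinset, Set.mem_ofPred_eq,
      or_iff_right_of_imp (by rintro rfl; exact SimpleGraph.Walk.end_mem_tail_support hw.not_nil)]
  rw [tail_toFinset, Set.ncard_coe_finset, List.toFinset_card_of_nodup hw.support_nodup,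
    List.length_tail, SimpleGraph.Walk.length_support, Nat.add_sub_cancel]

theorem ncard_compl_remainder_add_one (hw : w.IsCycle) :
    (remainder w)ᶜ.ncard + 1 = w.length := by
  have compl_eq : (remainder w)ᶜ = {v | v ∈ w.support} \ {x} :=
    Set.ext fun v => notMem_remainder_iff
  rw [compl_eq, ← ncard_support_eq_length hw]
  exact Set.ncard_sdiff_singleton_add_one w.start_mem_support w.support.finite_toSet

theorem IsPendantCycleWalk.toSubgraph_adj_iff (hw : IsPendantCycleWalk w)
    (hv : v ∉ remainder w) : w.toSubgraph.Adj v u ↔ G.Adj v u := by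
  obtain ⟨hv, hvx⟩ := notMem_remainder_iff.1 hv
  have degree_two := hw.ncard_adj v hv hvx
  have neighbors_eq : w.toSubgraph.neighborSet v = {u | G.Adj v u} :=
    Set.eq_of_subset_of_ncard_le (w.toSubgraph.neighborSet_subset v)
      (by rw [degree_two, hw.isCycle.ncard_neighborSet_toSubgraph_eq_two hv])
      (Set.finite_of_ncard_ne_zero (by omega))
  exact Set.ext_iff.1 neighbors_eq u

theorem IsPendantCycleWalk.adj_getVert_succ_iff (hw : IsPendantCycleWalk w) {t : ℕ}
    (ht : t + 1 < w.length) :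
    G.Adj (w.getVert (t + 1)) v ↔ v = w.getVert t ∨ v = w.getVert (t + 2) := by
  have deleted : w.getVert (t + 1) ∉ remainder w := by
    rw [getVert_mem_remainder_iff hw.isCycle ht.le]
    omega
  rw [← hw.toSubgraph_adj_iff deleted]
  exact Set.ext_iff.1 (hw.isCycle.neighborSet_toSubgraph_internal t.succ_ne_zero ht) v

theorem IsPendantCycleWalk.mem_edges_iff (hw : IsPendantCycleWalk w) {e : Sym2 V}
    (he : e ∈ G.edgeSet) : e ∈ w.edges ↔ ∃ v ∈ e, v ∉ remainder w := by
  rw [← w.mem_edges_toSubgraph]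
  induction e with | _ u v
  constructor
  · intro (huv : w.toSubgraph.Adj u v)
    have hu := w.mem_verts_toSubgraph.1 huv.fst_mem
    have hv := w.mem_verts_toSubgraph.1 huv.snd_mem
    by_cases hux : u = x
    · exact ⟨v, Sym2.mem_mk_right u v, notMem_remainder_iff.2 ⟨hv, (he.ne <| hux.trans ·.symm)⟩⟩
    · exact ⟨u, Sym2.mem_mk_left u v, notMem_remainder_iff.2 ⟨hu, hux⟩⟩
  · rintro ⟨a, ha, hdel⟩
    rcases Sym2.mem_iff.1 ha with rfl | rfl
    · exact (hw.toSubgraph_adj_iff hdel).2 he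
    · exact ((hw.toSubgraph_adj_iff hdel).2 he.symm).symm

theorem IsPendantCycleWalk.eq_base_of_adj (hw : IsPendantCycleWalk w) (huv : G.Adj u v)
    (hu : u ∈ remainder w) (hv : v ∉ remainder w) : u = x := by
  by_contra hux
  exact notMem_remainder_iff.2
    ⟨w.mem_verts_toSubgraph.1 ((hw.toSubgraph_adj_iff hv).2 huv.symm).snd_mem, hux⟩ hu

theorem IsPendantCycleWalk.eq_snd_or_eq_penultimate_of_adj (hw : IsPendantCycleWalk w)
    (hv : v ∉ remainder w) (hxv : G.Adj x v) : v = w.snd ∨ v = w.penultimate := by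
  have mem_neighborSet : v ∈ w.toSubgraph.neighborSet x :=
    ((hw.toSubgraph_adj_iff hv).2 hxv.symm).symm
  rwa [hw.isCycle.neighborSet_toSubgraph_endpoint] at mem_neighborSet

theorem prod_map_darts {R : Type*} [CommMonoid R] {y : V} (w : G.Walk x y) (f : V → V → R) :
    (w.darts.map fun d => f d.fst d.snd).prod =
      ∏ t ∈ Finset.range w.length, f (w.getVert t) (w.getVert (t + 1)) := by
  induction w with
  | nil => simp
  | cons _ _ ih => simp [Finset.prod_range_succ', ih, mul_comm]

end PendantCycleWalk

section PendantCycleRank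

variable [Fintype V] {K : Type*} [Field K] {G : SimpleGraph V} {A : Matrix V V K} {x : V}
  {w : G.Walk x x}

theorem IsPendantCycleWalk.mulVec_getVert_succ (hw : IsPendantCycleWalk w)
    (hA : ∀ u v, A u v ≠ 0 ↔ G.Adj u v) (f : V → K) {t : ℕ} (ht : t + 1 < w.length) :
    (A *ᵥ f) (w.getVert (t + 1)) =
      A (w.getVert (t + 1)) (w.getVert t) * f (w.getVert t) +
        A (w.getVert (t + 1)) (w.getVert (t + 2)) * f (w.getVert (t + 2)) := by
  refine Finset.sum_eq_add _ _ (hw.isCycle.getVert_sub_one_ne_getVert_add_one ht.le)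
    (fun v _ hv => mul_eq_zero_of_left ?_ _) (by simp) (by simp)
  have not_adj : ¬ G.Adj (w.getVert (t + 1)) v := by
    rw [hw.adj_getVert_succ_iff ht]
    tauto
  exact not_not.1 (mt (hA _ _).1 not_adj)

theorem IsPendantCycleWalk.sum_base_row (hw : IsPendantCycleWalk w)
    (hA : ∀ u v, A u v ≠ 0 ↔ G.Adj u v) (f : V → K) :
    ∑ v with v ∉ remainder w, A x v * f v =
      A x w.snd * f w.snd + A x w.penultimate * f w.penultimate := by
  have three_le := hw.isCycle.three_le_length
  have snd_deleted : w.snd ∉ remainder w := by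
    rw [SimpleGraph.Walk.snd, getVert_mem_remainder_iff hw.isCycle (by omega)]
    omega
  have penultimate_deleted : w.penultimate ∉ remainder w := by
    rw [SimpleGraph.Walk.penultimate, getVert_mem_remainder_iff hw.isCycle (by omega)]
    omega
  refine Finset.sum_eq_add _ _ hw.isCycle.snd_ne_penultimate
    (fun v hv hne => mul_eq_zero_of_left ?_ _) (by simp [snd_deleted])
    (by simp [penultimate_deleted])
  have not_adj : ¬ G.Adj x v := fun hxv =>
    not_or.2 hne (hw.eq_snd_or_eq_penultimate_of_adj (Finset.mem_filter.1 hv).2 hxv)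
  exact not_not.1 (mt (hA _ _).1 not_adj)

theorem IsPendantCycleWalk.recurrence_of_mulVec_eq_zero (hw : IsPendantCycleWalk w)
    (hA : ∀ u v, A u v ≠ 0 ↔ G.Adj u v) {f : V → K}
    (hf : ∀ v ∉ remainder w, (A *ᵥ f) v = 0) {t : ℕ} (ht : t + 1 < w.length) :
    A (w.getVert (t + 1)) (w.getVert t) * f (w.getVert t) +
      A (w.getVert (t + 1)) (w.getVert (t + 2)) * f (w.getVert (t + 2)) = 0 := by
  rw [← hw.mulVec_getVert_succ hA f ht]
  refine hf _ ?_
  rw [getVert_mem_remainder_iff hw.isCycle ht.le]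
  omega

variable {k : ℕ}

theorem IsPendantCycleWalk.eq_zero_of_mulVec_eq_zero (hw : IsPendantCycleWalk w)
    (hA : ∀ u v, A u v ≠ 0 ↔ G.Adj u v) (hk : w.length = 2 * k + 1) {f : V → K}
    (hf₀ : ∀ v ∈ remainder w, f v = 0) (hf : ∀ v ∉ remainder w, (A *ᵥ f) v = 0) : f = 0 := by
  have base : f x = 0 := hf₀ x (base_mem_remainder w)
  have along_walk : ∀ t ≤ 2 * k + 1, f (w.getVert t) = 0 :=
    eq_zero_of_two_step_recurrence (a := fun t => A (w.getVert t) (w.getVert (t + 1)))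
      (b := fun t => A (w.getVert (t + 1)) (w.getVert t)) (F := fun t => f (w.getVert t))
      (fun t ht => (hA _ _).2 (w.adj_getVert_succ (by omega)))
      (fun t ht => (hA _ _).2 (w.adj_getVert_succ (by omega)).symm)
      (fun t ht => hw.recurrence_of_mulVec_eq_zero hA hf (by omega))
      (by rwa [w.getVert_zero]) (by rwa [← hk, w.getVert_length])
  funext v
  by_cases hv : v ∈ remainder w
  · exact hf₀ v hv
  · obtain ⟨t, ht, rfl⟩ := exists_getVert_succ_of_notMem_remainder hv
    exact along_walk _ (by omega)

theorem IsPendantCycleWalk.sum_row_eq_zero (hw : IsPendantCycleWalk w)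
    (hA : ∀ u v, A u v ≠ 0 ↔ G.Adj u v) (hk : w.length = 2 * k + 1)
    (hprod : (w.darts.map fun d => A d.fst d.snd).prod +
      (w.darts.map fun d => A d.snd d.fst).prod = 0)
    {f : V → K} (hf : ∀ v ∉ remainder w, (A *ᵥ f) v = 0) {v : V} (hv : v ∈ remainder w) :
    ∑ u with u ∉ remainder w, A v u * f u = 0 := by
  by_cases hvx : v = x
  · have closing : A (w.getVert 0) w.snd * f w.snd +
        A (w.getVert (2 * k + 1)) (w.getVert (2 * k)) * f (w.getVert (2 * k)) = 0 :=
      add_eq_zero_of_two_step_recurrence (a := fun t => A (w.getVert t) (w.getVert (t + 1)))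
        (b := fun t => A (w.getVert (t + 1)) (w.getVert t)) (F := fun t => f (w.getVert t))
        (fun t ht => (hA _ _).2 (w.adj_getVert_succ (by omega)))
        (fun t ht => (hA _ _).2 (w.adj_getVert_succ (by omega)).symm)
        (fun t ht => hw.recurrence_of_mulVec_eq_zero hA hf (by omega))
        (by rw [← hk, w.getVert_length, w.getVert_zero])
        (by rwa [prod_map_darts w fun u v => A u v, prod_map_darts w fun u v => A v u, hk] at hprod)
    have finish : w.getVert (2 * k + 1) = x := by rw [← hk, w.getVert_length]
    have penultimate_eq : w.getVert (2 * k) = w.penultimate := by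
      rw [SimpleGraph.Walk.penultimate, hk, Nat.add_sub_cancel]
    rw [w.getVert_zero, finish, penultimate_eq] at closing
    rw [hvx, hw.sum_base_row hA f, closing]
  · refine Finset.sum_eq_zero fun u hu => mul_eq_zero_of_left (not_not.1 (mt (hA v u).1 ?_)) _
    exact fun hvu => hvx (hw.eq_base_of_adj hvu hv (Finset.mem_filter.1 hu).2)

theorem IsPendantCycleWalk.rank_eq_rank_submatrix_add [Fintype (remainder w)]
    (hw : IsPendantCycleWalk w) (hA : ∀ u v, A u v ≠ 0 ↔ G.Adj u v) (hk : w.length = 2 * k + 1)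
    (hprod : (w.darts.map fun d => A d.fst d.snd).prod +
      (w.darts.map fun d => A d.snd d.fst).prod = 0) :
    A.rank = (A.submatrix ((↑) : remainder w → V) ((↑) : remainder w → V)).rank + 2 * k := by
  rw [rank_eq_rank_submatrix_add_ncard_compl
    (fun _ => hw.eq_zero_of_mulVec_eq_zero hA hk)
    (fun _ hf _ => hw.sum_row_eq_zero hA hk hprod hf)]
  have hcard := ncard_compl_remainder_add_one hw.isCycle
  omega

end PendantCycleRank

section InducedEdges

variable (G : SimpleGraph V) (S : Set V)

theorem image_edgeSet_induce :
    Sym2.map (↑) '' (G.induce S).edgeSet = {e ∈ G.edgeSet | ∀ v ∈ e, v ∈ S} := by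
  ext e
  constructor
  · rintro ⟨e, he, rfl⟩
    induction e with | _ u v
    exact ⟨he, by simp⟩
  · rintro ⟨he, heS⟩
    induction e with | _ u v
    exact ⟨s(⟨u, heS u (Sym2.mem_mk_left u v)⟩, ⟨v, heS v (Sym2.mem_mk_right u v)⟩), he, rfl⟩

theorem ncard_edgeSet_induce :
    (G.induce S).edgeSet.ncard = {e ∈ G.edgeSet | ∀ v ∈ e, v ∈ S}.ncard := by
  rw [← image_edgeSet_induce,
    Set.ncard_image_of_injective _ (Sym2.map.injective Subtype.val_injective)]

end InducedEdges

section MatchingNumber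

variable {G : SimpleGraph V} {N : G.Subgraph}

theorem eq_of_isMatching_of_mem (hN : N.IsMatching) {e₁ e₂ : Sym2 V} (h₁ : e₁ ∈ N.edgeSet)
    (h₂ : e₂ ∈ N.edgeSet) {v : V} (hv₁ : v ∈ e₁) (hv₂ : v ∈ e₂) : e₁ = e₂ := by
  obtain ⟨u₁, rfl⟩ := hv₁
  obtain ⟨u₂, rfl⟩ := hv₂
  exact congrArg _ (hN.eq_of_adj_left h₁ h₂)

theorem isMatching_iSup_subgraphOfAdj {ι : Type*} {a b : ι → V} (hadj : ∀ i, G.Adj (a i) (b i))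
    (hinj : Function.Injective (Sum.elim a b)) :
    (⨆ i, G.subgraphOfAdj (hadj i)).IsMatching := by
  refine SimpleGraph.Subgraph.IsMatching.iSup
    (fun i => SimpleGraph.Subgraph.IsMatching.subgraphOfAdj (hadj i)) fun i j hij => ?_
  have ha := (hinj.comp Sum.inl_injective).ne hij
  have hb := (hinj.comp Sum.inr_injective).ne hij
  have hab (i j : ι) : a i ≠ b j := hinj.ne Sum.inl_ne_inr
  simp only [Function.comp_apply, Sum.elim_inl, Sum.elim_inr] at ha hb hab
  simp [SimpleGraph.support_subgraphOfAdj, ha.symm, hb.symm, hab, (hab _ _).symm]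

theorem ncard_edgeSet_iSup_subgraphOfAdj {ι : Type*} {a b : ι → V}
    (hadj : ∀ i, G.Adj (a i) (b i)) (hinj : Function.Injective (Sum.elim a b)) :
    (⨆ i, G.subgraphOfAdj (hadj i)).edgeSet.ncard = Nat.card ι := by
  have edgeSet_eq : (⨆ i, G.subgraphOfAdj (hadj i)).edgeSet = Set.range fun i => s(a i, b i) := by
    simp [SimpleGraph.Subgraph.edgeSet_iSup, SimpleGraph.edgeSet_subgraphOfAdj,
      Set.iUnion_singleton_eq_range]
  rw [edgeSet_eq, Set.ncard_range_of_injective]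
  intro i j hij
  rcases Sym2.eq_iff.1 hij with ⟨h, -⟩ | ⟨h, -⟩
  · exact Sum.inl_injective (hinj h)
  · exact absurd (hinj (a₁ := Sum.inl i) (a₂ := Sum.inr j) h) Sum.inl_ne_inr

theorem exists_isMatching_induce (hN : N.IsMatching) (S : Set V) :
    ∃ N' : (G.induce S).Subgraph, N'.IsMatching ∧
      N'.edgeSet.ncard = {e ∈ N.edgeSet | ∀ v ∈ e, v ∈ S}.ncard := by
  let N' : (G.induce S).Subgraph :=
    { verts := {v | ∃ u : S, N.Adj v u}
      Adj u v := N.Adj u v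
      adj_sub := N.adj_sub
      edge_vert := fun h => ⟨_, h⟩
      symm := ⟨fun _ _ h => SimpleGraph.Subgraph.Adj.symm h⟩ }
  refine ⟨N', fun v ⟨u, hvu⟩ => ⟨u, hvu, fun t ht => Subtype.ext (hN.eq_of_adj_left ht hvu)⟩, ?_⟩
  rw [← N.edgeSet_spanningCoe, ← ncard_edgeSet_induce]
  rfl

variable [Finite V]

theorem two_mul_ncard_le_of_isMatching (hN : N.IsMatching) {E : Set (Sym2 V)}
    (hE : E ⊆ N.edgeSet) {W : Set V} (hW : ∀ e ∈ E, ∀ v ∈ e, v ∈ W) :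
    2 * E.ncard ≤ W.ncard := by
  have := Fintype.ofFinite V
  have two_ends (e) (he : e ∈ E.toFinset) : e.toFinset.card = 2 :=
    Sym2.card_toFinset_of_not_isDiag e <|
      G.not_isDiag_of_mem_edgeSet (N.edgeSet_subset (hE (Set.mem_toFinset.1 he)))
  have disjoint_ends : (E.toFinset : Set (Sym2 V)).PairwiseDisjoint Sym2.toFinset := by
    rw [Set.coe_toFinset]
    intro e₁ h₁ e₂ h₂ hne
    refine Finset.disjoint_left.2 fun v hv₁ hv₂ => hne ?_
    exact eq_of_isMatching_of_mem hN (hE h₁) (hE h₂) (Sym2.mem_toFinset.1 hv₁)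
      (Sym2.mem_toFinset.1 hv₂)
  have ends_subset : E.toFinset.biUnion Sym2.toFinset ⊆ W.toFinset := by
    simpa [Finset.subset_iff] using fun v e he hv => hW e he v hv
  calc 2 * E.ncard = ∑ e ∈ E.toFinset, e.toFinset.card := by
        rw [Finset.sum_congr rfl two_ends, Finset.sum_const, smul_eq_mul, mul_comm,
          Set.ncard_eq_toFinset_card']
    _ = (E.toFinset.biUnion Sym2.toFinset).card := (Finset.card_biUnion disjoint_ends).symm
    _ ≤ W.ncard := by rw [Set.ncard_eq_toFinset_card']; exact Finset.card_le_card ends_subset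

theorem bddAbove_ncard_edgeSet_isMatching (G : SimpleGraph V) :
    BddAbove {k | ∃ N : G.Subgraph, N.IsMatching ∧ N.edgeSet.ncard = k} := by
  refine ⟨G.edgeSet.ncard, ?_⟩
  rintro _ ⟨N, -, rfl⟩
  exact Set.ncard_le_ncard N.edgeSet_subset

theorem ncard_edgeSet_le_matchingNumber (hN : N.IsMatching) :
    N.edgeSet.ncard ≤ matchingNumber G :=
  le_csSup (bddAbove_ncard_edgeSet_isMatching G) ⟨N, hN, rfl⟩

theorem exists_isMatching_ncard_edgeSet_eq (G : SimpleGraph V) :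
    ∃ N : G.Subgraph, N.IsMatching ∧ N.edgeSet.ncard = matchingNumber G := by
  have nonempty : {k | ∃ N : G.Subgraph, N.IsMatching ∧ N.edgeSet.ncard = k}.Nonempty :=
    ⟨_, ⊥, fun _ h => h.elim, rfl⟩
  exact Nat.sSup_mem nonempty (bddAbove_ncard_edgeSet_isMatching G)

theorem matchingNumber_le_matchingNumber_induce_add {S W : Set V}
    (hW : ∀ e ∈ G.edgeSet, (∃ v ∈ e, v ∉ S) → ∀ v ∈ e, v ∈ W) :
    matchingNumber G ≤ matchingNumber (G.induce S) + W.ncard / 2 := by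
  obtain ⟨N, hN, hmax⟩ := exists_isMatching_ncard_edgeSet_eq G
  obtain ⟨N', hN', hcard⟩ := exists_isMatching_induce hN S
  let inside : Set (Sym2 V) := {e | ∀ v ∈ e, v ∈ S}
  have outside_le : 2 * (N.edgeSet \ inside).ncard ≤ W.ncard := by
    refine two_mul_ncard_le_of_isMatching hN Set.sdiff_subset fun e he =>
      hW e (N.edgeSet_subset he.1) ?_
    simpa [inside] using he.2
  have inside_le : (N.edgeSet ∩ inside).ncard ≤ matchingNumber (G.induce S) :=
    hcard.symm.trans_le (ncard_edgeSet_le_matchingNumber hN')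
  rw [← hmax, ← Set.ncard_inter_add_ncard_sdiff_eq_ncard N.edgeSet inside]
  omega

theorem matchingNumber_induce_add_ncard_edgeSet_le {S : Set V} (hN : N.IsMatching)
    (hS : Disjoint N.verts S) :
    matchingNumber (G.induce S) + N.edgeSet.ncard ≤ matchingNumber G := by
  obtain ⟨N', hN', hmax⟩ := exists_isMatching_ncard_edgeSet_eq (G.induce S)
  let ι := SimpleGraph.Embedding.induce (G := G) S
  have hι : (N'.map ι.toHom).IsMatching := hN'.map ι.toHom ι.injective
  have verts_map_subset : (N'.map ι.toHom).verts ⊆ S := by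
    rintro _ ⟨v, -, rfl⟩
    exact v.2
  have verts_disjoint : Disjoint (N'.map ι.toHom).verts N.verts :=
    hS.symm.mono_left verts_map_subset
  have edges_disjoint : Disjoint (N'.map ι.toHom).edgeSet N.edgeSet := by
    rw [Set.disjoint_left]
    intro e h₁ h₂
    induction e with | _ u v
    exact Set.disjoint_left.1 verts_disjoint h₁.fst_mem h₂.fst_mem
  have card_map : (N'.map ι.toHom).edgeSet.ncard = N'.edgeSet.ncard := by
    rw [SimpleGraph.Subgraph.edgeSet_map]
    exact Set.ncard_image_of_injective _ (Sym2.map.injective ι.injective)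
  rw [← hmax, ← card_map, ← Set.ncard_union_eq edges_disjoint, ← SimpleGraph.Subgraph.edgeSet_sup]
  exact ncard_edgeSet_le_matchingNumber
    (hι.sup hN (by rwa [hι.support_eq_verts, hN.support_eq_verts]))

end MatchingNumber

section PendantCycleMatching

variable {G : SimpleGraph V} {x : V} {w : G.Walk x x} {k : ℕ}

theorem exists_isMatching_disjoint_remainder (hw : w.IsCycle) (hk : w.length = 2 * k + 1) :
    ∃ N : G.Subgraph, N.IsMatching ∧ N.edgeSet.ncard = k ∧ Disjoint N.verts (remainder w) := by
  let a (j : Fin k) : V := w.getVert (2 * j + 1)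
  let b (j : Fin k) : V := w.getVert (2 * j + 2)
  have hadj (j : Fin k) : G.Adj (a j) (b j) := w.adj_getVert_succ (by omega)
  have hinj : Function.Injective (Sum.elim a b) := by
    have key {s t : ℕ} (hs : s + 1 ≤ 2 * k + 1) (ht : t + 1 ≤ 2 * k + 1)
        (h : w.getVert (s + 1) = w.getVert (t + 1)) : s = t :=
      Nat.succ_injective (hw.getVert_injOn (by simp; omega) (by simp; omega) h)
    refine Function.Injective.sumElim (fun i j h => ?_) (fun i j h => ?_) fun i j h => ?_
    all_goals
      have := key (by omega) (by omega) h
      omega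
  refine ⟨⨆ j, G.subgraphOfAdj (hadj j), isMatching_iSup_subgraphOfAdj hadj hinj, ?_, ?_⟩
  · rw [ncard_edgeSet_iSup_subgraphOfAdj hadj hinj, Nat.card_fin]
  · have deleted (t : ℕ) (ht : t < 2 * k) : w.getVert (t + 1) ∉ remainder w := by
      rw [getVert_mem_remainder_iff hw (by omega)]
      omega
    simp only [SimpleGraph.Subgraph.verts_iSup, SimpleGraph.subgraphOfAdj_verts,
      Set.disjoint_iUnion_left, Set.disjoint_insert_left, Set.disjoint_singleton_left]
    exact fun j => ⟨deleted _ (by omega), deleted _ (by omega)⟩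

theorem IsPendantCycleWalk.matchingNumber_eq_add [Finite V] (hw : IsPendantCycleWalk w)
    (hk : w.length = 2 * k + 1) :
    matchingNumber G = matchingNumber (G.induce (remainder w)) + k := by
  apply le_antisymm
  · have ends_on_cycle : ∀ e ∈ G.edgeSet, (∃ v ∈ e, v ∉ remainder w) → ∀ v ∈ e, v ∈ w.support :=
      fun e he hdel v hv => w.mem_support_of_mem_edges ((hw.mem_edges_iff he).2 hdel) hv
    have upper :=
      matchingNumber_le_matchingNumber_induce_add (W := {v | v ∈ w.support}) ends_on_cycle
    rw [ncard_support_eq_length hw.isCycle, hk] at upper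
    omega
  · obtain ⟨N, hN, hcard, hdisj⟩ := exists_isMatching_disjoint_remainder hw.isCycle hk
    exact hcard ▸ matchingNumber_induce_add_ncard_edgeSet_le hN hdisj

end PendantCycleMatching

section Cyclomatic

variable {G : SimpleGraph V} {S : Set V}

theorem card_connectedComponent_eq_of_retraction {r : V → S} (hr : ∀ v : S, r v = v)
    (hreach : ∀ v, G.Reachable v (r v))
    (hadj : ∀ u v, G.Adj u v → (G.induce S).Reachable (r u) (r v)) :
    Nat.card (G.induce S).ConnectedComponent = Nat.card G.ConnectedComponent := by
  let ι : G.induce S →g G := (SimpleGraph.Embedding.induce S).toHom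
  refine Nat.card_eq_of_bijective (SimpleGraph.ConnectedComponent.map ι) ⟨?_, ?_⟩
  · have reachable_retraction {u v : V} (huv : G.Reachable u v) :
        (G.induce S).Reachable (r u) (r v) := by
      obtain ⟨p⟩ := huv
      induction p with
      | nil => rfl
      | cons h _ ih => exact (hadj _ _ h).trans ih
    intro c d
    induction c, d using SimpleGraph.ConnectedComponent.ind₂ with | _ u v
    intro h
    have huv : (G.induce S).Reachable (r u) (r v) :=
      reachable_retraction (SimpleGraph.ConnectedComponent.exact h)
    rw [hr, hr] at huv
    exact SimpleGraph.ConnectedComponent.sound huv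
  · intro c
    induction c using SimpleGraph.ConnectedComponent.ind with | _ v
    exact ⟨(G.induce S).connectedComponentMk (r v),
      SimpleGraph.ConnectedComponent.sound (hreach v).symm⟩

variable {x : V} {w : G.Walk x x}

theorem IsPendantCycleWalk.card_connectedComponent_induce (hw : IsPendantCycleWalk w) :
    Nat.card (G.induce (remainder w)).ConnectedComponent = Nat.card G.ConnectedComponent := by
  let r (v : V) : remainder w :=
    if hv : v ∈ remainder w then ⟨v, hv⟩ else ⟨x, base_mem_remainder w⟩
  have r_of_mem {v : V} (hv : v ∈ remainder w) : r v = ⟨v, hv⟩ := dif_pos hv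
  have r_of_notMem {v : V} (hv : v ∉ remainder w) : r v = ⟨x, base_mem_remainder w⟩ := dif_neg hv
  refine card_connectedComponent_eq_of_retraction (r := r) (fun v => r_of_mem v.2)
    (fun v => ?_) fun u v huv => ?_
  · by_cases hv : v ∈ remainder w
    · rw [r_of_mem hv]
    · rw [r_of_notMem hv]
      exact ⟨(w.takeUntil v (notMem_remainder_iff.1 hv).1).reverse⟩
  · by_cases hu : u ∈ remainder w <;> by_cases hv : v ∈ remainder w
    · rw [r_of_mem hu, r_of_mem hv]
      exact SimpleGraph.Adj.reachable huv
    · rw [r_of_mem hu, r_of_notMem hv]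
      simp [hw.eq_base_of_adj huv hu hv]
    · rw [r_of_notMem hu, r_of_mem hv]
      simp [hw.eq_base_of_adj huv.symm hv hu]
    · rw [r_of_notMem hu, r_of_notMem hv]

theorem IsPendantCycleWalk.ncard_edgeSet_eq_add [Finite V] (hw : IsPendantCycleWalk w) :
    G.edgeSet.ncard = (G.induce (remainder w)).edgeSet.ncard + w.length := by
  have cycle_edges : G.edgeSet \ {e | ∀ v ∈ e, v ∈ remainder w} =
      (w.edges.toFinset : Set (Sym2 V)) := by
    ext e
    simp only [List.coe_toFinset]
    constructor
    · rintro ⟨he, hdel⟩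
      exact (hw.mem_edges_iff he).2 (by simpa using hdel)
    · intro he
      have := (hw.mem_edges_iff (w.edges_subset_edgeSet he)).1 he
      exact ⟨w.edges_subset_edgeSet he, by simpa using this⟩
  have card_cycle_edges : (w.edges.toFinset : Set (Sym2 V)).ncard = w.length := by
    rw [Set.ncard_coe_finset, List.toFinset_card_of_nodup hw.isCycle.edges_nodup, w.length_edges]
  rw [← Set.ncard_inter_add_ncard_sdiff_eq_ncard G.edgeSet {e | ∀ v ∈ e, v ∈ remainder w},
    cycle_edges, card_cycle_edges, ncard_edgeSet_induce]
  rfl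

theorem IsPendantCycleWalk.cyclomatic_eq_add_one [Fintype V] [Fintype (remainder w)]
    (hw : IsPendantCycleWalk w) : cyclomatic G = cyclomatic (G.induce (remainder w)) + 1 := by
  have card_deleted := ncard_compl_remainder_add_one hw.isCycle
  have card_vertices := Set.ncard_add_ncard_compl (remainder w)
  rw [← Nat.card_coe_set_eq, Nat.card_eq_fintype_card, Nat.card_eq_fintype_card] at card_vertices
  unfold cyclomatic
  rw [hw.ncard_edgeSet_eq_add, hw.card_connectedComponent_induce]
  omega

end Cyclomatic

section MixedGraph

theorem MixedGraph.hMatrix_ne_zero_iff [Fintype V] [DecidableEq V] (M : MixedGraph V) (u v : V) :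
    M.hMatrix u v ≠ 0 ↔ M.graph.Adj u v := by
  have forward := M.arc_adj u v
  have backward := fun h => (M.arc_adj v u h).symm
  unfold hMatrix
  split_ifs <;> simp_all

theorem MixedGraph.hMatrix_swap [Fintype V] [DecidableEq V] (M : MixedGraph V) (u v : V) :
    M.hMatrix v u = (if M.arc u v then -1 else 1) * (if M.arc v u then -1 else 1) *
      M.hMatrix u v := by
  have antisymm := M.arc_antisymm u v
  unfold hMatrix
  split_ifs <;> simp_all [M.graph.adj_comm u v]

theorem MixedGraph.prod_hMatrix_swap [Fintype V] [DecidableEq V] (M : MixedGraph V)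
    (l : List M.graph.Dart) :
    (l.map fun d => M.hMatrix d.snd d.fst).prod =
      (-1) ^ (l.countP (fun d => M.arc d.fst d.snd) + l.countP fun d => M.arc d.snd d.fst) *
        (l.map fun d => M.hMatrix d.fst d.snd).prod := by
  induction l with
  | nil => simp
  | cons d l ih =>
    simp only [List.map_cons, List.prod_cons, List.countP_cons, ih, M.hMatrix_swap d.fst d.snd]
    split_ifs <;> ring

theorem prod_hMatrix_add_prod_swap_eq_zero [Fintype V] [DecidableEq V] {M : MixedGraph V} {x : V}
    {w : M.graph.Walk x x} (hw : Odd (walkSignature M w)) :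
    (w.darts.map fun d => M.hMatrix d.fst d.snd).prod +
      (w.darts.map fun d => M.hMatrix d.snd d.fst).prod = 0 := by
  rw [walkSignature, Int.natAbs_odd, Int.odd_sub, ← Int.odd_add] at hw
  have arcs_odd : Odd ((w.darts.countP fun d => M.arc d.fst d.snd) +
      w.darts.countP fun d => M.arc d.snd d.fst) := by
    exact_mod_cast hw
  rw [M.prod_hMatrix_swap, arcs_odd.neg_one_pow, neg_one_mul, add_neg_cancel]

theorem CycleSig.exists_walk_of_mem_verts {M : MixedGraph V} {C : M.graph.Subgraph}
    {P : ℕ → Prop} (hC : CycleSig M C P) {x : V} (hx : x ∈ C.verts) :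
    ∃ w : M.graph.Walk x x, w.IsCycle ∧ {v | v ∈ w.support} = C.verts ∧ P (walkSignature M w) := by
  obtain ⟨u, w, hw, hverts, -, hP⟩ := hC
  have hxw : x ∈ w.support := Set.ext_iff.1 hverts x |>.2 hx
  have signature_rotate : walkSignature M (w.rotate x hxw) = walkSignature M w := by
    have darts_perm := (w.rotate_darts x hxw).perm
    simp only [walkSignature, darts_perm.countP_eq]
  refine ⟨w.rotate x hxw, (SimpleGraph.Walk.isCycle_rotate hxw).2 hw, ?_, signature_rotate ▸ hP⟩
  simpa only [SimpleGraph.Walk.mem_support_rotate_iff] using hverts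

theorem IsPendantCycleWalk.hRank_eq_add [Fintype V] [DecidableEq V] {M : MixedGraph V} {x : V}
    {w : M.graph.Walk x x} [Fintype (remainder w)] [DecidableEq (remainder w)] {k : ℕ}
    (hw : IsPendantCycleWalk w) (hk : w.length = 2 * k + 1) (hodd : Odd (walkSignature M w)) :
    M.hRank = (M.induce (remainder w)).hRank + 2 * k :=
  hw.rank_eq_rank_submatrix_add M.hMatrix_ne_zero_iff hk
    (prod_hMatrix_add_prod_swap_eq_zero hodd)

end MixedGraph

theorem pendant_odd_cycle_reduction_iff_general [Fintype V] [DecidableEq V] (M : MixedGraph V)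
    (hκ : (evenCycleCount M.graph : ℤ) = cyclomatic M.graph - 1)
    (C : M.graph.Subgraph) (x : V) (hx : x ∈ C.verts)
    (hdeg : ∀ v ∈ C.verts, v ≠ x → {u | M.graph.Adj v u}.ncard = 2)
    (hodd : Odd C.verts.ncard) (hsig : CycleSig M C Odd) :
    (M.hRank : ℤ) =
        2 * (matchingNumber M.graph : ℤ) - 2 * (evenCycleCount M.graph : ℤ) ↔
      ((M.induce (C.vertsᶜ ∪ {x})).hRank : ℤ) =
        2 * (matchingNumber (M.induce (C.vertsᶜ ∪ {x})).graph : ℤ) -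
          2 * cyclomatic (M.induce (C.vertsᶜ ∪ {x})).graph := by
  obtain ⟨w, hcycle, hverts, hsig⟩ := hsig.exists_walk_of_mem_verts hx
  have hw : IsPendantCycleWalk w := ⟨hcycle, by rwa [← hverts] at hdeg⟩
  have remainder_eq : remainder w = C.vertsᶜ ∪ {x} := by rw [remainder, hverts]
  obtain ⟨k, hk⟩ := hodd
  rw [← hverts, ncard_support_eq_length hcycle] at hk
  have rank_eq : M.hRank = (M.induce (C.vertsᶜ ∪ {x})).hRank + 2 * k := by
    convert hw.hRank_eq_add hk hsig <;> exact remainder_eq.symm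
  have matching_eq : matchingNumber M.graph =
      matchingNumber (M.induce (C.vertsᶜ ∪ {x})).graph + k :=
    remainder_eq ▸ hw.matchingNumber_eq_add hk
  have cyclomatic_eq : cyclomatic M.graph = cyclomatic (M.induce (C.vertsᶜ ∪ {x})).graph + 1 := by
    change _ = cyclomatic (M.graph.induce (C.vertsᶜ ∪ {x})) + 1
    convert hw.cyclomatic_eq_add_one <;> exact remainder_eq.symm
  omega

/-- Let G̃ be connected with pairwise vertex-disjoint cycles,
κ(G) = c(G) − 1, c(G) ≥ 2, no pendant vertices, and a pendant odd cycle C̃_q of odd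
signature with unique degree-3 vertex x; let H̃ = G̃ − V(C_q) + x. Then
r(G̃) = 2m(G) − 2κ(G) iff r(H̃) = 2m(H) − 2c(H). -/
theorem pendant_odd_cycle_reduction_iff
    {V : Type u} [Fintype V] [DecidableEq V] (M : MixedGraph V)
    (hconn : M.graph.Connected) (hdisj : CyclesVertexDisjoint M.graph)
    (hκ : (evenCycleCount M.graph : ℤ) = cyclomatic M.graph - 1)
    (hc : 2 ≤ cyclomatic M.graph) (hnp : NoPendantVerts M.graph)
    (C : M.graph.Subgraph) (x : V) (hpc : IsPendantCycle M.graph C x)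
    (hodd : Odd C.verts.ncard) (hsig : CycleSig M C Odd) :
    (M.hRank : ℤ) =
        2 * (matchingNumber M.graph : ℤ) - 2 * (evenCycleCount M.graph : ℤ) ↔
      ((M.induce (C.vertsᶜ ∪ {x})).hRank : ℤ) =
        2 * (matchingNumber (M.induce (C.vertsᶜ ∪ {x})).graph : ℤ) -
          2 * cyclomatic (M.induce (C.vertsᶜ ∪ {x})).graph :=
  pendant_odd_cycle_reduction_iff_general M hκ C x hpc.2.1 hpc.2.2.2 hodd hsig

end MixedPaper
end
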